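/- Higher-order Euler–Lagrange equation on time scales. Suppose y* ∈ C^r_rd(𝕋;ℝⁿ) is a weak local minimizer of 𝓛 with all boundary data fixed: there is δ > 0 such that 𝓛[y*] ≤ 𝓛[y] for every y ∈ C^r_rd(𝕋;ℝⁿ) with y^{Δ^i}(a) = y*^{Δ^i}(a) and y^{Δ^i}(ρ^{r−1}(b)) = y*^{Δ^i}(ρ^{r−1}(b)) for i = 0,…,r−1, and ‖y − y*‖_{r,∞} < δ. Write X*(t) = (y*(t), y*^Δ(t), …, y*^{Δ^r}(t)). Then there exist functions p^0, …, p^{r−1} : 𝕋' → ℝⁿ, each delta differentiable at every t ∈ 𝕋^{k^r}, such that for all t ∈ 𝕋^{k^r}: (p^0)^Δ(t) = −L_{u_0}(t, X*(t)); (p^i)^Δ(t) = −L_{u_i}(t, X*(t)) − p^{i−1}(σ(t)) for i = 1, …, r−1; and p^{r−1}(σ(t)) = −L_{u_r}(t, X*(t)). (Equivalently, in delta-integral form: ψ^{r−1}(σ(t)) = −L_{u_r}(t,X*(t)) where ψ^0(σ(t)) = −∫_a^{σ(t)} L_{u_0}(ξ,X*(ξ)) Δξ + c_0 and ψ^i(σ(t))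 = −∫_a^{σ(t)} [L_{u_i}(ξ,X*(ξ)) + ψ^{i−1}(σ(ξ))] Δξ + c_i for constants c_0,…,c_{r−1} ∈ ℝⁿ.) -/

import Mathlib

open Set Filter

noncomputable section

-- Forward jump operator of the set `S`.
open Classical in
def tsSigma (S : Set ℝ) (t : ℝ) : ℝ :=
  if ({s | s ∈ S ∧ t < s}).Nonempty then sInf {s | s ∈ S ∧ t < s} else t

-- Backward jump operator of the set `S`.
open Classical in
def tsRho (S : Set ℝ) (t : ℝ) : ℝ :=
  if ({s | s ∈ S ∧ s < t}).Nonempty then sSup {s | s ∈ S ∧ s < t} else t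

/-- Graininess function. -/
def tsMu (S : Set ℝ) (t : ℝ) : ℝ := tsSigma S t - t

/-- `S^k = S \ (ρ(max S), max S]`. -/
def tsTk (S : Set ℝ) : Set ℝ := S \ Set.Ioc (tsRho S (sSup S)) (sSup S)

/-- Delta differentiability at `t` of `f` regarded as a function on the time scale `S`,
with delta derivative `d`. -/
def deltaDiffAt {E : Type*} [NormedAddCommGroup E] [NormedSpace ℝ E]
    (S : Set ℝ) (f : ℝ → E) (t : ℝ) (d : E) : Prop :=
  ∀ ε > 0, ∃ δ > 0, ∀ s ∈ S ∩ Set.Ioo (t - δ) (t + δ),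
    ‖f (tsSigma S t) - f s - (tsSigma S t - s) • d‖ ≤ ε * |tsSigma S t - s|

/-- rd-continuity of `f` on its domain `S`: continuity (within `S`) at right-dense points and
existence of a finite left-sided limit along `S` at left-dense points. -/
def RdContinuousOn {E : Type*} [NormedAddCommGroup E]
    (S : Set ℝ) (f : ℝ → E) : Prop :=
  ∀ t ∈ S, (tsSigma S t = t → ContinuousWithinAt f S t) ∧
    (tsRho S t = t → ∃ l : E, Filter.Tendsto f (nhdsWithin t (S ∩ Set.Iio t)) (nhds l))

/-- `y ∈ C¹_rd(T)`, with delta derivative `yd`. -/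
def C1rd {E : Type*} [NormedAddCommGroup E] [NormedSpace ℝ E]
    (T : Set ℝ) (y yd : ℝ → E) : Prop :=
  (∀ t ∈ tsTk T, deltaDiffAt T y t (yd t)) ∧ RdContinuousOn (tsTk T) yd

/-- `F` is a delta antiderivative of `f` on the time scale `S`; the delta integral
`∫_c^d f Δt` is `F d - F c` for any such `F`. -/
def IsDeltaAntideriv {E : Type*} [NormedAddCommGroup E] [NormedSpace ℝ E]
    (S : Set ℝ) (f F : ℝ → E) : Prop :=
  ∀ t ∈ tsTk S, deltaDiffAt S F t (f t)

/-- Sup norm of `f` over the set `S`. -/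
def tsSupNorm {E : Type*} [NormedAddCommGroup E] (S : Set ℝ) (f : ℝ → E) : ℝ :=
  sSup ((fun t => ‖f t‖) '' S)

abbrev En (n : ℕ) : Type := EuclideanSpace ℝ (Fin n)


structure TS (A : Set ℝ) (a M : ℝ) (τ : ℝ → ℝ) : Prop where
  closed : IsClosed A
  sub : A ⊆ Icc a M
  ha : a ∈ A
  hM : M ∈ A
  lt : a < M
  tau : ∀ s ∈ Icc a M, τ s ∈ A ∧ τ s ≤ s ∧ ∀ u ∈ A, u ≤ s → u ≤ τ s

namespace TS

variable {A : Set ℝ} {a M : ℝ} {τ : ℝ → ℝ}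

theorem sigma_M (h : TS A a M τ) : tsSigma A M = M := by
  unfold tsSigma
  rw [if_neg]
  rintro ⟨s, hs, hlt⟩
  exact absurd (h.sub hs).2 (not_le.2 hlt)

theorem sigma_mem_of_lt (h : TS A a M τ) {t : ℝ} (htM : t < M) :
    tsSigma A t ∈ A ∧ t ≤ tsSigma A t ∧ (∀ u ∈ A, t < u → tsSigma A t ≤ u) ∧
      ∀ x, tsSigma A t < x → ∃ u ∈ A, t < u ∧ u < x := by
  have hne : ({s | s ∈ A ∧ t < s}).Nonempty := ⟨M, h.hM, htM⟩
  have hbdd : BddBelow {s | s ∈ A ∧ t < s} := ⟨t, fun s hs => hs.2.le⟩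
  have e : tsSigma A t = sInf {s | s ∈ A ∧ t < s} := by unfold tsSigma; rw [if_pos hne]
  rw [e]
  refine ⟨?_, ?_, ?_, ?_⟩
  · have := csInf_mem_closure hne hbdd
    have h2 : closure {s | s ∈ A ∧ t < s} ⊆ A := by
      rw [← h.closed.closure_eq]
      exact closure_mono (fun s hs => h.closed.closure_eq.symm ▸ hs.1)
    exact h2 this
  · exact le_csInf hne (fun s hs => hs.2.le)
  · intro u hu htu
    exact csInf_le hbdd ⟨hu, htu⟩
  · intro x hx
    obtain ⟨u, hu, hux⟩ := exists_lt_of_csInf_lt hne hx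
    exact ⟨u, hu.1, hu.2, hux⟩

theorem sigma_spec (h : TS A a M τ) {t : ℝ} (ht : t ∈ A) :
    tsSigma A t ∈ A ∧ t ≤ tsSigma A t ∧ (∀ u ∈ A, t < u → tsSigma A t ≤ u) := by
  rcases (h.sub ht).2.lt_or_eq with hlt | rfl
  · obtain ⟨h1, h2, h3, _⟩ := h.sigma_mem_of_lt hlt
    exact ⟨h1, h2, h3⟩
  · rw [h.sigma_M]
    exact ⟨ht, le_rfl, fun u _ hu => hu.le⟩

theorem sSup_eq (h : TS A a M τ) : sSup A = M :=
  le_antisymm (csSup_le ⟨a, h.ha⟩ fun x hx => (h.sub hx).2)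
    (le_csSup ⟨M, fun x hx => (h.sub hx).2⟩ h.hM)

theorem rho_spec (h : TS A a M τ) :
    tsRho A M ∈ A ∧ tsRho A M ≤ M ∧ (∀ u ∈ A, u < M → u ≤ tsRho A M) ∧
      ∀ x, x < tsRho A M → ∃ u ∈ A, u < M ∧ x < u := by
  have hne : ({s | s ∈ A ∧ s < M}).Nonempty := ⟨a, h.ha, h.lt⟩
  have hbdd : BddAbove {s | s ∈ A ∧ s < M} := ⟨M, fun s hs => hs.2.le⟩
  have e : tsRho A M = sSup {s | s ∈ A ∧ s < M} := by unfold tsRho; rw [if_pos hne]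
  rw [e]
  refine ⟨?_, ?_, ?_, ?_⟩
  · have := csSup_mem_closure hne hbdd
    have h2 : closure {s | s ∈ A ∧ s < M} ⊆ A := by
      rw [← h.closed.closure_eq]
      exact closure_mono (fun s hs => h.closed.closure_eq.symm ▸ hs.1)
    exact h2 this
  · exact csSup_le hne (fun s hs => hs.2.le)
  · intro u hu htu
    exact le_csSup hbdd ⟨hu, htu⟩
  · intro x hx
    obtain ⟨u, hu, hux⟩ := exists_lt_of_lt_csSup hne hx
    exact ⟨u, hu.1, hu.2, hux⟩

theorem tk_eq (h : TS A a M τ) : tsTk A = A ∩ Iic (tsRho A M) := by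
  unfold tsTk
  rw [h.sSup_eq]
  ext t
  constructor
  · rintro ⟨ht, hn⟩
    refine ⟨ht, ?_⟩
    by_contra hc
    exact hn ⟨not_le.1 hc, (h.sub ht).2⟩
  · rintro ⟨ht, hn⟩
    exact ⟨ht, fun hc => absurd hc.1 (not_lt.2 hn)⟩

theorem tk_sub (h : TS A a M τ) : tsTk A ⊆ A := by rw [h.tk_eq]; exact inter_subset_left

theorem tk_closed (h : TS A a M τ) : IsClosed (tsTk A) := by
  rw [h.tk_eq]; exact h.closed.inter isClosed_Iic

theorem tk_compact (h : TS A a M τ) : IsCompact (tsTk A) :=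
  isCompact_Icc.of_isClosed_subset h.tk_closed (h.tk_sub.trans h.sub)

theorem mem_tk (h : TS A a M τ) {t : ℝ} (ht : t ∈ A) (hlt : t < M) : t ∈ tsTk A := by
  rw [h.tk_eq]; exact ⟨ht, h.rho_spec.2.2.1 t ht hlt⟩

theorem dense_of_M (h : TS A a M τ) (hm : M ∈ tsTk A) {x : ℝ} (hx : x < M) :
    ∃ u ∈ A, u < M ∧ x < u := by
  rw [h.tk_eq] at hm
  exact h.rho_spec.2.2.2 x (lt_of_lt_of_le hx hm.2)

theorem tau_tk (h : TS A a M τ) {s : ℝ} (hs : s ∈ Ico a M) : τ s ∈ tsTk A := by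
  obtain ⟨h1, h2, _⟩ := h.tau s ⟨hs.1, hs.2.le⟩
  exact h.mem_tk h1 (lt_of_le_of_lt h2 hs.2)

theorem tau_eq (h : TS A a M τ) {t : ℝ} (ht : t ∈ A) : τ t = t := by
  obtain ⟨h1, h2, h3⟩ := h.tau t (h.sub ht)
  exact le_antisymm h2 (h3 t ht le_rfl)

theorem tau_gap (h : TS A a M τ) {t s : ℝ} (ht : t ∈ A) (h1 : t ≤ s) (h2 : s < tsSigma A t) :
    τ s = t := by
  have h3 := h.sigma_spec ht
  obtain ⟨k1, k2, k3⟩ := h.tau s ⟨(h.sub ht).1.trans h1, h2.le.trans (h.sub h3.1).2⟩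
  refine le_antisymm ?_ (k3 t ht h1)
  by_contra hc
  have := h3.2.2 _ k1 (not_le.1 hc)
  linarith

theorem tau_between (h : TS A a M τ) {s x : ℝ} (hs : s ∈ A) (h1 : s ≤ x) (h2 : x ≤ M) :
    s ≤ τ x ∧ τ x ≤ x := by
  obtain ⟨k1, k2, k3⟩ := h.tau x ⟨(h.sub hs).1.trans h1, h2⟩
  exact ⟨k3 s hs h1, k2⟩

end TS

section dd
variable {E : Type*} [NormedAddCommGroup E] [NormedSpace ℝ E]

theorem dd_sigma {S : Set ℝ} {f : ℝ → E} {t : ℝ} {d : E} (ht : t ∈ S)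
    (h : deltaDiffAt S f t d) : f (tsSigma S t) = f t + (tsSigma S t - t) • d := by
  have : ‖f (tsSigma S t) - f t - (tsSigma S t - t) • d‖ ≤ 0 := by
    apply le_of_forall_pos_le_add
    intro e he
    obtain ⟨δ, hδ, hh⟩ := h (e / (|tsSigma S t - t| + 1)) (by positivity)
    refine (hh t ⟨ht, by constructor <;> linarith⟩).trans ?_
    rw [zero_add, div_mul_eq_mul_div, div_le_iff₀ (by positivity)]
    nlinarith [abs_nonneg (tsSigma S t - t)]
  have h2 := norm_le_zero_iff.1 this
  rw [sub_sub, sub_eq_zero] at h2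
  exact h2

theorem dd_cont {S : Set ℝ} {f : ℝ → E} {t : ℝ} {d : E} (ht : t ∈ S)
    (h : deltaDiffAt S f t d) : ContinuousWithinAt f S t := by
  rw [Metric.continuousWithinAt_iff]
  intro e he
  have h0 := dd_sigma ht h
  set μ := tsSigma S t - t with hμ
  obtain ⟨δ, hδ, hh⟩ := h (e / (2 * (|μ| + 1))) (by positivity)
  refine ⟨min (min δ 1) (e / (2 * (‖d‖ + 1))), by positivity, ?_⟩
  intro s hs hd
  rw [Real.dist_eq] at hd
  have hd1 : |s - t| < δ := hd.trans_le ((min_le_left _ _).trans (min_le_left _ _))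
  have hd2 : |s - t| < 1 := hd.trans_le ((min_le_left _ _).trans (min_le_right _ _))
  have hd3 : |s - t| < e / (2 * (‖d‖ + 1)) := hd.trans_le (min_le_right _ _)
  have h1 := hh s ⟨hs, by rw [abs_lt] at hd1; constructor <;> linarith⟩
  rw [dist_eq_norm]
  have e1 : f s - f t = -(f (tsSigma S t) - f s - (tsSigma S t - s) • d) + (s - t) • d := by
    rw [h0, hμ]; module
  have h2 : |tsSigma S t - s| ≤ |μ| + 1 := by
    have : tsSigma S t - s = μ - (s - t) := by rw [hμ]; ring
    rw [this]
    exact (abs_sub _ _).trans (by linarith)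
  have h3 : ‖(s - t) • d‖ < e / 2 := by
    rw [norm_smul, Real.norm_eq_abs]
    rw [lt_div_iff₀ (by positivity)] at hd3
    nlinarith [norm_nonneg d, abs_nonneg (s - t), abs_nonneg μ]
  have h4 : e / (2 * (|μ| + 1)) * |tsSigma S t - s| ≤ e / 2 := by
    rw [div_mul_eq_mul_div, div_le_div_iff₀ (by positivity) (by positivity)]
    nlinarith [abs_nonneg μ]
  rw [e1]
  refine (norm_add_le _ _).trans_lt ?_
  rw [norm_neg]
  linarith

theorem dd_add {S : Set ℝ} {f g : ℝ → E} {t : ℝ} {d e : E}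
    (hf : deltaDiffAt S f t d) (hg : deltaDiffAt S g t e) :
    deltaDiffAt S (fun x => f x + g x) t (d + e) := by
  intro ε hε
  obtain ⟨δ1, h1, k1⟩ := hf (ε / 2) (by positivity)
  obtain ⟨δ2, h2, k2⟩ := hg (ε / 2) (by positivity)
  refine ⟨min δ1 δ2, lt_min h1 h2, ?_⟩
  rintro s ⟨hs, hs1, hs2⟩
  have hm1 := min_le_left δ1 δ2
  have hm2 := min_le_right δ1 δ2
  have q1 := k1 s ⟨hs, by constructor <;> linarith⟩
  have q2 := k2 s ⟨hs, by constructor <;> linarith⟩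
  have : f (tsSigma S t) + g (tsSigma S t) - (f s + g s) - (tsSigma S t - s) • (d + e)
    = (f (tsSigma S t) - f s - (tsSigma S t - s) • d) +
      (g (tsSigma S t) - g s - (tsSigma S t - s) • e) := by module
  simp only [this]
  refine (norm_add_le _ _).trans ?_
  linarith

theorem dd_smul {S : Set ℝ} {f : ℝ → E} {t : ℝ} {d : E} (c : ℝ)
    (hf : deltaDiffAt S f t d) :
    deltaDiffAt S (fun x => c • f x) t (c • d) := by
  intro ε hε
  obtain ⟨δ1, h1, k1⟩ := hf (ε / (|c| + 1)) (by positivity)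
  refine ⟨δ1, h1, ?_⟩
  intro s hs
  have q1 := k1 s hs
  have : c • f (tsSigma S t) - c • f s - (tsSigma S t - s) • c • d
    = c • (f (tsSigma S t) - f s - (tsSigma S t - s) • d) := by module
  simp only [this]
  rw [norm_smul, Real.norm_eq_abs]
  have : |c| * (ε / (|c| + 1)) ≤ ε := by
    rw [mul_div_assoc', div_le_iff₀ (by positivity)]; nlinarith
  calc |c| * ‖f (tsSigma S t) - f s - (tsSigma S t - s) • d‖
      ≤ |c| * (ε / (|c| + 1) * |tsSigma S t - s|) := by gcongr
    _ = (|c| * (ε / (|c| + 1))) * |tsSigma S t - s| := by ring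
    _ ≤ _ := by gcongr

theorem dd_const {S : Set ℝ} {t : ℝ} (c : E) : deltaDiffAt S (fun _ => c) t 0 := by
  intro ε hε
  refine ⟨1, one_pos, fun s _ => ?_⟩
  simp only [sub_self, smul_zero, norm_zero]; positivity

theorem dd_congr {S : Set ℝ} {f g : ℝ → E} {t : ℝ} {d : E} (hσ : tsSigma S t ∈ S)
    (hfg : ∀ x ∈ S, f x = g x) (hf : deltaDiffAt S f t d) : deltaDiffAt S g t d := by
  intro ε hε
  obtain ⟨δ, hδ, k⟩ := hf ε hε
  refine ⟨δ, hδ, fun s hs => ?_⟩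
  rw [← hfg _ hσ, ← hfg _ hs.1]
  exact k s hs

end dd

theorem dd_inner {E : Type*} [NormedAddCommGroup E] [InnerProductSpace ℝ E]
    {S : Set ℝ} {f g : ℝ → E} {t : ℝ} {d e : E} (ht : t ∈ S)
    (hf : deltaDiffAt S f t d) (hg : deltaDiffAt S g t e) :
    deltaDiffAt S (fun x => inner ℝ (f x) (g x)) t
      (inner ℝ d (g (tsSigma S t)) + inner ℝ (f t) e) := by
  have hc := dd_cont ht hf
  intro ε hε
  set G := g (tsSigma S t) with hG
  obtain ⟨δ1, h1, k1⟩ := hf (ε / (3 * (‖G‖ + 1))) (by positivity)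
  obtain ⟨δ2, h2, k2⟩ := hg (ε / (3 * (‖f t‖ + 1))) (by positivity)
  rw [Metric.continuousWithinAt_iff] at hc
  obtain ⟨δ3, h3, k3⟩ := hc (min 1 (ε / (3 * (‖e‖ + 1)))) (by positivity)
  refine ⟨min (min δ1 δ2) δ3, by positivity, ?_⟩
  rintro s ⟨hs, hs1, hs2⟩
  have hm1 : min (min δ1 δ2) δ3 ≤ δ1 := (min_le_left _ _).trans (min_le_left _ _)
  have hm2 : min (min δ1 δ2) δ3 ≤ δ2 := (min_le_left _ _).trans (min_le_right _ _)
  have hm3 : min (min δ1 δ2) δ3 ≤ δ3 := min_le_right _ _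
  have q1 := k1 s ⟨hs, by constructor <;> linarith⟩
  have q2 := k2 s ⟨hs, by constructor <;> linarith⟩
  have q3 := k3 hs (by rw [Real.dist_eq, abs_lt]; constructor <;> linarith)
  rw [dist_eq_norm] at q3
  have q4 := q3.trans_le (min_le_left _ _)
  have q5 := q3.trans_le (min_le_right _ _)
  have q6 : ‖f s‖ ≤ ‖f t‖ + 1 := by
    have := norm_sub_norm_le (f s) (f t); linarith
  set D := |tsSigma S t - s| with hD
  have hD0 : 0 ≤ D := abs_nonneg _
  have key : inner ℝ (f (tsSigma S t)) G - inner ℝ (f s) (g s)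
      - (tsSigma S t - s) • (inner ℝ d G + inner ℝ (f t) e)
      = inner ℝ (f (tsSigma S t) - f s - (tsSigma S t - s) • d) G
        + inner ℝ (f s) (G - g s - (tsSigma S t - s) • e)
        + (tsSigma S t - s) * inner ℝ (f s - f t) e := by
    simp only [inner_sub_left, inner_sub_right, inner_smul_left, inner_smul_right, smul_eq_mul]
    simp
    ring
  have key2 : ‖inner ℝ (f (tsSigma S t)) G - inner ℝ (f s) (g s)
      - (tsSigma S t - s) • (inner ℝ d G + inner ℝ (f t) e)‖ ≤ ε * D := by
    rw [key]
    have b1 : ‖inner ℝ (f (tsSigma S t) - f s - (tsSigma S t - s) • d) G‖ ≤ ε / 3 * D := by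
      refine (norm_inner_le_norm _ _).trans ?_
      calc _ ≤ (ε / (3 * (‖G‖ + 1)) * D) * (‖G‖ + 1) := by gcongr; linarith
        _ = ε / 3 * D := by field_simp
    have b2 : ‖inner ℝ (f s) (G - g s - (tsSigma S t - s) • e)‖ ≤ ε / 3 * D := by
      refine (norm_inner_le_norm _ _).trans ?_
      calc _ ≤ (‖f t‖ + 1) * (ε / (3 * (‖f t‖ + 1)) * D) := by gcongr
        _ = ε / 3 * D := by field_simp
    have b3 : ‖(tsSigma S t - s) * inner ℝ (f s - f t) e‖ ≤ ε / 3 * D := by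
      rw [norm_mul, Real.norm_eq_abs, ← hD]
      calc _ ≤ D * ((ε / (3 * (‖e‖ + 1))) * (‖e‖ + 1)) := by
            gcongr
            refine (norm_inner_le_norm _ _).trans ?_
            gcongr
            linarith
        _ = ε / 3 * D := by field_simp
    refine (norm_add₃_le).trans ?_
    linarith
  exact key2

open MeasureTheory Topology

theorem sm_of_rightcont {E : Type*} [NormedAddCommGroup E] {h : ℝ → E}
    (hh : ∀ x, ContinuousWithinAt h (Ioi x) x) : StronglyMeasurable h := by
  have hm : ∀ k : ℕ, StronglyMeasurable
      (fun x : ℝ => h (((⌊x * ((k : ℝ) + 1)⌋ : ℝ) + 1) / ((k : ℝ) + 1))) := by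
    intro k
    have h1 : StronglyMeasurable (fun z : ℤ => h (((z : ℝ) + 1) / ((k : ℝ) + 1))) :=
      StronglyMeasurable.of_discrete
    exact h1.comp_measurable (Int.measurable_floor.comp (measurable_id.mul_const _))
  refine stronglyMeasurable_of_tendsto atTop hm ?_
  rw [tendsto_pi_nhds]
  intro x
  have h2 : Tendsto (fun k : ℕ => ((⌊x * ((k : ℝ) + 1)⌋ : ℝ) + 1) / ((k : ℝ) + 1)) atTop
      (𝓝[>] x) := by
    rw [tendsto_nhdsWithin_iff]
    have lo : ∀ k : ℕ, x < ((⌊x * ((k : ℝ) + 1)⌋ : ℝ) + 1) / ((k : ℝ) + 1) := by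
      intro k
      rw [lt_div_iff₀ (by positivity)]
      exact Int.lt_floor_add_one _
    have hi : ∀ k : ℕ, ((⌊x * ((k : ℝ) + 1)⌋ : ℝ) + 1) / ((k : ℝ) + 1) ≤
        x + 1 / ((k : ℝ) + 1) := by
      intro k
      have hk : (0 : ℝ) < (k : ℝ) + 1 := by positivity
      rw [div_le_iff₀ hk, add_mul, one_div, inv_mul_cancel₀ hk.ne']
      have := Int.floor_le (x * ((k : ℝ) + 1))
      linarith
    refine ⟨?_, Eventually.of_forall lo⟩
    refine tendsto_of_tendsto_of_tendsto_of_le_of_le tendsto_const_nhds ?_ (fun k => (lo k).le) hi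
    have := tendsto_one_div_add_atTop_nhds_zero_nat (𝕜 := ℝ)
    simpa using tendsto_const_nhds.add this
  exact (hh x).tendsto.comp h2

def RW {E : Type*} [NormedAddCommGroup E] (A : Set ℝ) (f : ℝ → E) : Prop :=
  ∀ t ∈ tsTk A, (tsSigma A t = t → ContinuousWithinAt f (tsTk A) t) ∧
    ∃ l : E, Tendsto f (𝓝[tsTk A ∩ Iio t] t) (𝓝 l)

section RWsec
variable {E : Type*} [NormedAddCommGroup E] {A : Set ℝ} {a M : ℝ} {τ : ℝ → ℝ} {f : ℝ → E}

theorem RW.of_cont (hf : ContinuousOn f (tsTk A)) : RW A f := fun t ht =>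
  ⟨fun _ => hf t ht, f t, ((hf t ht).mono inter_subset_left).tendsto⟩

theorem RW.of_rd (h : TS A a M τ) (hf : RdContinuousOn (tsTk A) f) : RW A f := by
  intro t ht
  obtain ⟨h1, h2⟩ := hf t ht
  constructor
  · intro hσ
    apply h1
    unfold tsSigma
    split_ifs with hne
    · obtain ⟨u, hu, htu⟩ := hne
      have hbdd : BddBelow {s | s ∈ tsTk A ∧ t < s} := ⟨t, fun s hs => hs.2.le⟩
      have hlt : t < M := htu.trans_le (h.sub (h.tk_sub hu)).2
      refine le_antisymm ?_ (le_csInf ⟨u, hu, htu⟩ fun s hs => hs.2.le)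
      apply le_of_forall_gt_imp_ge_of_dense
      intro x hx
      obtain ⟨v, hv, htv, hvx⟩ := (h.sigma_mem_of_lt hlt).2.2.2 (min x u)
        (by rw [hσ]; exact lt_min hx htu)
      have hvk : v ∈ tsTk A := by
        rw [h.tk_eq] at hu ⊢
        exact ⟨hv, (hvx.trans_le (min_le_right _ _)).le.trans hu.2⟩
      exact (csInf_le hbdd ⟨hvk, htv⟩).trans (hvx.trans_le (min_le_left _ _)).le
    · rfl
  · by_cases hρ : tsRho (tsTk A) t = t
    · exact h2 hρ
    · refine ⟨0, ?_⟩
      have : 𝓝[tsTk A ∩ Iio t] t = ⊥ := by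
        unfold tsRho at hρ
        split_ifs at hρ with hne
        · have hbdd : BddAbove {s | s ∈ tsTk A ∧ s < t} := ⟨t, fun s hs => hs.2.le⟩
          have hle : sSup {s | s ∈ tsTk A ∧ s < t} ≤ t := csSup_le hne fun s hs => hs.2.le
          have hlt := lt_of_le_of_ne hle hρ
          rw [← mem_closure_iff_nhdsWithin_neBot.not.trans (not_neBot)]
          intro hc
          rw [mem_closure_iff_nhds] at hc
          obtain ⟨x, hx1, hx2⟩ := hc _ (Ioi_mem_nhds hlt)
          exact absurd (le_csSup hbdd hx2) (not_le.2 hx1)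
        · exact absurd rfl hρ
      rw [this]
      exact tendsto_bot

theorem RW.comp {F : Type*} [NormedAddCommGroup F] {Φ : ℝ × E → F}
    (hf : RW A f) (hΦ : ContinuousOn Φ (tsTk A ×ˢ (univ : Set E))) :
    RW A (fun t => Φ (t, f t)) := by
  intro t ht
  obtain ⟨h1, l, h2⟩ := hf t ht
  constructor
  · intro hσ
    have := hΦ (t, f t) ⟨ht, mem_univ _⟩
    exact ContinuousWithinAt.comp (t := tsTk A ×ˢ (univ : Set E)) (f := fun x => (x, f x)) this
      (continuousWithinAt_id.prodMk (h1 hσ)) (fun x hx => ⟨hx, mem_univ _⟩)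
  · refine ⟨Φ (t, l), ?_⟩
    have := (hΦ (t, l) ⟨ht, mem_univ _⟩).tendsto
    refine this.comp ?_
    rw [tendsto_nhdsWithin_iff]
    refine ⟨?_, ?_⟩
    · rw [nhds_prod_eq]
      exact (tendsto_id.mono_left nhdsWithin_le_nhds).prodMk h2
    · filter_upwards [self_mem_nhdsWithin] with x hx using ⟨hx.1, mem_univ _⟩

theorem RW.prodMk {F : Type*} [NormedAddCommGroup F] {g : ℝ → F}
    (hf : RW A f) (hg : RW A g) : RW A (fun t => (f t, g t)) := by
  intro t ht
  obtain ⟨h1, l, h2⟩ := hf t ht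
  obtain ⟨k1, m, k2⟩ := hg t ht
  exact ⟨fun hσ => (h1 hσ).prodMk (k1 hσ), (l, m), h2.prodMk_nhds k2⟩

theorem RW.pi {ι : Type*} [Fintype ι] {g : ι → ℝ → E}
    (hf : ∀ i, RW A (g i)) : RW A (fun t => (fun i => g i t)) := by
  intro t ht
  choose l hl using fun i => (hf i t ht).2
  exact ⟨fun hσ => continuousWithinAt_pi.2 fun i => (hf i t ht).1 hσ, l, tendsto_pi_nhds.2 hl⟩

theorem RW.comp' {F : Type*} [NormedAddCommGroup F] {Φ : E → F}
    (hf : RW A f) (hΦ : Continuous Φ) : RW A (fun t => Φ (f t)) :=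
  RW.comp (Φ := fun p => Φ p.2) hf (hΦ.comp continuous_snd).continuousOn

theorem RW.add {g : ℝ → E} (hf : RW A f) (hg : RW A g) : RW A (fun t => f t + g t) :=
  (hf.prodMk hg).comp' (Φ := fun p : E × E => p.1 + p.2) (by fun_prop)

theorem RW.sum {ι : Type*} (s : Finset ι) {g : ι → ℝ → E}
    (hf : ∀ i ∈ s, RW A (g i)) : RW A (fun t => ∑ i ∈ s, g i t) := by
  classical
  induction s using Finset.induction_on with
  | empty => simpa using RW.of_cont continuousOn_const
  | insert i s hi ih =>
    simp only [Finset.sum_insert hi]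
    exact (hf i (by simp)).add (ih fun j hj => hf j (by simp [hj]))

theorem RW.smul [NormedSpace ℝ E] (c : ℝ) (hf : RW A f) : RW A (fun t => c • f t) :=
  hf.comp' (Φ := fun p : E => c • p) (by fun_prop)

theorem RW.innerP {E : Type*} [NormedAddCommGroup E] [InnerProductSpace ℝ E] {f g : ℝ → E}
    (hf : RW A f) (hg : RW A g) : RW A (fun t => inner ℝ (f t) (g t)) :=
  (hf.prodMk hg).comp' (Φ := fun p : E × E => inner ℝ p.1 p.2) (by fun_prop)

theorem RW.comp_sigma (h : TS A a M τ) (hf : ContinuousOn f A) :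
    RW A (fun t => f (tsSigma A t)) := by
  intro t ht
  have htA := h.tk_sub ht
  have hfc := hf t htA
  constructor
  · intro hσ
    show Tendsto _ _ (𝓝 (f (tsSigma A t)))
    rw [hσ]
    refine hfc.tendsto.comp ?_
    rw [tendsto_nhdsWithin_iff]
    refine ⟨?_, by filter_upwards [self_mem_nhdsWithin] with x hx using (h.sigma_spec (h.tk_sub hx)).1⟩
    rw [tendsto_order]
    constructor
    · intro y hy
      filter_upwards [self_mem_nhdsWithin, mem_nhdsWithin_of_mem_nhds (Ioi_mem_nhds hy)] with x hx hyx
      exact lt_of_lt_of_le hyx (h.sigma_spec (h.tk_sub hx)).2.1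
    · intro y hy
      rcases (h.sub htA).2.lt_or_eq with hlt | rfl
      · obtain ⟨u, hu, htu, huy⟩ := (h.sigma_mem_of_lt hlt).2.2.2 y (by rw [hσ]; exact hy)
        filter_upwards [self_mem_nhdsWithin, mem_nhdsWithin_of_mem_nhds (Iio_mem_nhds htu)] with x hx hxu
        exact ((h.sigma_spec (h.tk_sub hx)).2.2 u hu hxu).trans_lt huy
      · filter_upwards [self_mem_nhdsWithin] with x hx
        exact (h.sub (h.sigma_spec (h.tk_sub hx)).1).2.trans_lt hy
  · refine ⟨f t, hfc.tendsto.comp ?_⟩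
    rw [tendsto_nhdsWithin_iff]
    refine ⟨?_, by filter_upwards [self_mem_nhdsWithin] with x hx using (h.sigma_spec (h.tk_sub hx.1)).1⟩
    have h1 : Tendsto (fun x : ℝ => x) (𝓝[tsTk A ∩ Iio t] t) (𝓝 t) := tendsto_id.mono_left nhdsWithin_le_nhds
    refine tendsto_of_tendsto_of_tendsto_of_le_of_le' h1 tendsto_const_nhds ?_ ?_
    · filter_upwards [self_mem_nhdsWithin] with x hx using (h.sigma_spec (h.tk_sub hx.1)).2.1
    · filter_upwards [self_mem_nhdsWithin] with x hx using (h.sigma_spec (h.tk_sub hx.1)).2.2 t htA hx.2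

theorem RW.bdd (h : TS A a M τ) (hf : RW A f) : ∃ C, 0 ≤ C ∧ ∀ t ∈ tsTk A, ‖f t‖ ≤ C := by
  have key : ∃ C, ∀ t ∈ tsTk A, t ∈ tsTk A → ‖f t‖ ≤ C := by
    refine h.tk_compact.induction_on (p := fun s => ∃ C, ∀ t ∈ s, t ∈ tsTk A → ‖f t‖ ≤ C)
      ⟨0, by simp⟩ ?_ ?_ ?_
    · rintro s t hst ⟨C, hC⟩
      exact ⟨C, fun x hx => hC x (hst hx)⟩
    · rintro s t ⟨C, hC⟩ ⟨D, hD⟩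
      refine ⟨max C D, ?_⟩
      rintro x (hx | hx) hxA
      · exact (hC x hx hxA).trans (le_max_left _ _)
      · exact (hD x hx hxA).trans (le_max_right _ _)
    · intro t ht
      obtain ⟨h1, l, h2⟩ := hf t ht
      have e2 : ∀ᶠ x in 𝓝[tsTk A ∩ Iio t] t, ‖f x‖ < ‖l‖ + 1 :=
        h2.norm.eventually (Iio_mem_nhds (by linarith))
      rw [eventually_nhdsWithin_iff] at e2
      have e1 : ∀ᶠ x in 𝓝[tsTk A] t, t < x → ‖f x‖ < ‖f t‖ + 1 := by
        by_cases hσ : tsSigma A t = t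
        · have := (h1 hσ).norm.eventually (Iio_mem_nhds (show ‖f t‖ < ‖f t‖ + 1 by linarith))
          filter_upwards [this] with x hx _ using hx
        · have hs := h.sigma_spec (h.tk_sub ht)
          have hlt : t < tsSigma A t := lt_of_le_of_ne hs.2.1 (Ne.symm hσ)
          filter_upwards [self_mem_nhdsWithin, mem_nhdsWithin_of_mem_nhds (Iio_mem_nhds hlt)] with x hx hx2 hx3
          exact absurd (hs.2.2 x (h.tk_sub hx) hx3) (not_le.2 hx2)
      refine ⟨_, e1.and (mem_nhdsWithin_of_mem_nhds e2), max (‖f t‖ + 1) (‖l‖ + 1), ?_⟩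
      rintro x ⟨hx1, hx2⟩ hxA
      rcases lt_trichotomy x t with hlt | rfl | hgt
      · exact (hx2 ⟨hxA, hlt⟩).le.trans (le_max_right _ _)
      · exact (by linarith : ‖f x‖ ≤ ‖f x‖ + 1).trans (le_max_left _ _)
      · exact (hx1 hgt).le.trans (le_max_left _ _)
  obtain ⟨C, hC⟩ := key
  exact ⟨max C 0, le_max_right _ _, fun t ht => (hC t ht ht).trans (le_max_left _ _)⟩

theorem RW.rightcont (h : TS A a M τ) (hf : RW A f) {s : ℝ} (hs : s ∈ Ico a M) :
    ContinuousWithinAt (fun x => f (τ x)) (Ioi s) s := by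
  obtain ⟨k1, k2, k3⟩ := h.tau s ⟨hs.1, hs.2.le⟩
  have hk := h.tau_tk hs
  by_cases hlt : s < tsSigma A (τ s)
  · refine tendsto_const_nhds.congr' ?_
    filter_upwards [self_mem_nhdsWithin, mem_nhdsWithin_of_mem_nhds (Iio_mem_nhds hlt)] with x hx hx2
    rw [h.tau_gap k1 (k2.trans (le_of_lt hx)) hx2]
  · have hsp := h.sigma_spec k1
    have hσ : tsSigma A (τ s) = τ s := le_antisymm (k3 _ hsp.1 (not_lt.1 hlt)) hsp.2.1
    have hts : τ s = s := by
      by_contra hne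
      have : τ s < s := lt_of_le_of_ne k2 hne
      obtain ⟨u, hu, h1, h2⟩ := (h.sigma_mem_of_lt (this.trans hs.2)).2.2.2 s (by rwa [hσ])
      exact absurd (k3 u hu h2.le) (not_le.2 h1)
    have hsA : s ∈ A := hts ▸ k1
    have hc := (hf _ hk).1 hσ
    rw [hts] at hc
    show Tendsto _ _ (𝓝 (f (τ s)))
    rw [hts]
    refine hc.tendsto.comp ?_
    rw [tendsto_nhdsWithin_iff]
    constructor
    · have h1 : Tendsto (fun x : ℝ => x) (𝓝[>] s) (𝓝 s) := tendsto_id.mono_left nhdsWithin_le_nhds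
      refine tendsto_of_tendsto_of_tendsto_of_le_of_le' tendsto_const_nhds h1 ?_ ?_
      · filter_upwards [self_mem_nhdsWithin, mem_nhdsWithin_of_mem_nhds (Iio_mem_nhds hs.2)] with x hx hx2
        exact (h.tau_between hsA (le_of_lt hx) (le_of_lt hx2)).1
      · filter_upwards [self_mem_nhdsWithin, mem_nhdsWithin_of_mem_nhds (Iio_mem_nhds hs.2)] with x hx hx2
        exact (h.tau_between hsA (le_of_lt hx) (le_of_lt hx2)).2
    · filter_upwards [self_mem_nhdsWithin, mem_nhdsWithin_of_mem_nhds (Iio_mem_nhds hs.2)] with x hx hx2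
      exact h.tau_tk ⟨hs.1.trans (le_of_lt hx), hx2⟩

theorem RW.sm (h : TS A a M τ) (hf : RW A f) :
    StronglyMeasurable ((Ico a M).indicator (fun x => f (τ x))) := by
  apply sm_of_rightcont
  intro x
  have hM := h.lt
  rcases lt_or_ge x a with hx | hx
  · have : (Ico a M).indicator (fun x => f (τ x)) =ᶠ[𝓝 x] fun _ => 0 := by
      filter_upwards [Iio_mem_nhds hx] with y hy
      exact indicator_of_notMem (fun hc => absurd hc.1 (not_le.2 hy)) _
    exact (continuousAt_const.congr this.symm).continuousWithinAt
  · rcases lt_or_ge x M with hx2 | hx2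
    · refine (hf.rightcont h ⟨hx, hx2⟩).congr_of_eventuallyEq ?_ (indicator_of_mem (show x ∈ Ico a M from ⟨hx, hx2⟩) _)
      filter_upwards [self_mem_nhdsWithin, mem_nhdsWithin_of_mem_nhds (Iio_mem_nhds hx2)] with y hy hy2
      exact indicator_of_mem (show y ∈ Ico a M from ⟨hx.trans (le_of_lt hy), hy2⟩) _
    · refine (continuousWithinAt_const (b := (0 : E))).congr ?_ ?_
      · intro y hy
        exact indicator_of_notMem (fun hc => absurd hc.2 (not_lt.2 (hx2.trans (le_of_lt hy)))) _
      · exact indicator_of_notMem (fun hc => absurd hc.2 (not_lt.2 hx2)) _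

theorem RW.integrable (h : TS A a M τ) (hf : RW A f) :
    IntervalIntegrable (fun x => f (τ x)) volume a M := by
  rw [intervalIntegrable_iff_integrableOn_Ico_of_le h.lt.le]
  obtain ⟨C, hC0, hC⟩ := hf.bdd h
  have h1 : AEStronglyMeasurable (fun x => f (τ x)) (volume.restrict (Ico a M)) := by
    refine ((hf.sm h).aestronglyMeasurable (μ := volume.restrict (Ico a M))).congr ?_
    filter_upwards [ae_restrict_mem measurableSet_Ico] with x hx
    exact indicator_of_mem hx _
  refine Integrable.of_bound h1 C ?_
  filter_upwards [ae_restrict_mem measurableSet_Ico] with x hx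
  exact hC _ (h.tau_tk hx)

theorem RW.integrable' (h : TS A a M τ) (hf : RW A f) {x y : ℝ} (hx : x ∈ Icc a M)
    (hy : y ∈ Icc a M) : IntervalIntegrable (fun x => f (τ x)) volume x y := by
  refine (hf.integrable h).mono_set ?_
  rw [uIcc_of_le h.lt.le]
  exact uIcc_subset_Icc hx hy

end RWsec

def tI {E : Type*} [NormedAddCommGroup E] [NormedSpace ℝ E] (a : ℝ) (τ : ℝ → ℝ) (f : ℝ → E)
    (t : ℝ) : E := ∫ s in a..t, f (τ s)

section tIsec
variable {E : Type*} [NormedAddCommGroup E] [NormedSpace ℝ E]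
  {A : Set ℝ} {a M : ℝ} {τ : ℝ → ℝ} {f g : ℝ → E}

theorem tI_a : tI a τ f a = 0 := by simp [tI]

theorem tI_cont (h : TS A a M τ) (hf : RW A f) : ContinuousOn (tI a τ f) (Icc a M) := by
  have := intervalIntegral.continuousOn_primitive_interval' (a := a) (hf.integrable h) left_mem_uIcc
  rwa [uIcc_of_le h.lt.le] at this

theorem ae_ne (M : ℝ) : ∀ᵐ x : ℝ, x ≠ M := by
  simp [ae_iff, measure_singleton]

theorem tI_sub (h : TS A a M τ) (hf : RW A f) {x y : ℝ} (hx : x ∈ Icc a M) (hy : y ∈ Icc a M) :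
    tI a τ f y - tI a τ f x = ∫ s in x..y, f (τ s) := by
  have haa : a ∈ Icc a M := ⟨le_rfl, h.lt.le⟩
  exact intervalIntegral.integral_interval_sub_left (hf.integrable' h haa hy)
    (hf.integrable' h haa hx)

theorem tI_dd [CompleteSpace E] (h : TS A a M τ) (hf : RW A f) {t : ℝ} (ht : t ∈ tsTk A) :
    deltaDiffAt A (tI a τ f) t (f t) := by
  have htA := h.tk_sub ht
  have hsp := h.sigma_spec htA
  by_cases hσ : tsSigma A t = t
  · have hc := (hf t ht).1 hσ
    intro ε hε
    rw [Metric.continuousWithinAt_iff] at hc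
    obtain ⟨δ, hδ, hd⟩ := hc ε hε
    refine ⟨δ, hδ, ?_⟩
    rintro s ⟨hs, hs1, hs2⟩
    rw [hσ, tI_sub h hf (h.sub hs) (h.sub htA)]
    have e1 : (t - s) • f t = ∫ _ in s..t, f t := by simp
    rw [e1, ← intervalIntegral.integral_sub (hf.integrable' h (h.sub hs) (h.sub htA)) (by simp)]
    apply intervalIntegral.norm_integral_le_of_norm_le_const_ae
    filter_upwards [ae_ne M] with x hxM hx
    have hxM' : x < M := by
      refine lt_of_le_of_ne ?_ hxM
      exact (uIoc_subset_uIcc.trans (uIcc_subset_Icc (h.sub hs) (h.sub htA)) hx).2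
    have hxa : a ≤ x := (uIoc_subset_uIcc.trans (uIcc_subset_Icc (h.sub hs) (h.sub htA)) hx).1
    have hk := h.tau_tk ⟨hxa, hxM'⟩
    have hd2 : |τ x - t| < δ := by
      rw [mem_uIoc] at hx
      rcases hx with ⟨h1, h2⟩ | ⟨h1, h2⟩
      · have := h.tau_between hs h1.le hxM'.le
        rw [abs_lt]; constructor <;> linarith
      · have := h.tau_between htA h1.le hxM'.le
        rw [abs_lt]; constructor <;> linarith
    have := hd hk (by rwa [Real.dist_eq])
    rw [dist_eq_norm] at this
    exact this.le
  · have hlt : t < tsSigma A t := lt_of_le_of_ne hsp.2.1 (Ne.symm hσ)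
    have e0 : tI a τ f (tsSigma A t) - tI a τ f t = (tsSigma A t - t) • f t := by
      rw [tI_sub h hf (h.sub htA) (h.sub hsp.1)]
      have : (∫ s in t..tsSigma A t, f (τ s)) = ∫ s in t..tsSigma A t, f t := by
        apply intervalIntegral.integral_congr_ae
        filter_upwards [ae_ne (tsSigma A t)] with x hx1 hx
        rw [uIoc_of_le hlt.le] at hx
        rw [h.tau_gap htA hx.1.le (lt_of_le_of_ne hx.2 hx1)]
      rw [this]; simp
    have hc : ContinuousWithinAt (fun s => tI a τ f t - tI a τ f s - (t - s) • f t) A t := by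
      have h1 : ContinuousWithinAt (tI a τ f) A t := ((tI_cont h hf) t (h.sub htA)).mono h.sub
      refine (continuousWithinAt_const.sub h1).sub ?_
      exact Continuous.continuousWithinAt (by fun_prop)
    intro ε hε
    rw [Metric.continuousWithinAt_iff] at hc
    obtain ⟨δ, hδ, hd⟩ := hc (ε * (tsSigma A t - t)) (mul_pos hε (by linarith))
    refine ⟨min δ (tsSigma A t - t), lt_min hδ (by linarith), ?_⟩
    rintro s ⟨hs, hs1, hs2⟩
    have hm1 := min_le_left δ (tsSigma A t - t)
    have hm2 := min_le_right δ (tsSigma A t - t)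
    have hst : s ≤ t := by
      by_contra hc
      have := hsp.2.2 s hs (not_le.1 hc)
      linarith
    have hd1 := hd hs (by rw [Real.dist_eq, abs_lt]; constructor <;> linarith)
    rw [dist_eq_norm] at hd1
    have e2 : tI a τ f (tsSigma A t) - tI a τ f s - (tsSigma A t - s) • f t
        = (tI a τ f t - tI a τ f s - (t - s) • f t) - (tI a τ f t - tI a τ f t - (t - t) • f t) := by
      rw [sub_eq_iff_eq_add.1 e0]; module
    rw [e2]
    refine hd1.le.trans ?_
    rw [abs_of_nonneg (by linarith)]
    gcongr

theorem tI_lin (h : TS A a M τ) {k : ℝ → E} (c : ℝ) (hf : RW A f) (hg : RW A g)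
    (hk : ∀ t ∈ tsTk A, k t = f t + c • g t) {t : ℝ} (ht : t ∈ Icc a M) :
    tI a τ k t = tI a τ f t + c • tI a τ g t := by
  have haa : a ∈ Icc a M := ⟨le_rfl, h.lt.le⟩
  have i1 := hf.integrable' h haa ht
  have i2 := hg.integrable' h haa ht
  unfold tI
  have i3 : IntervalIntegrable (fun x => c • g (τ x)) volume a t := i2.smul c
  rw [← intervalIntegral.integral_smul, ← intervalIntegral.integral_add i1 i3]
  apply intervalIntegral.integral_congr_ae
  filter_upwards [ae_ne M] with x hx1 hx
  rw [uIoc_of_le ht.1] at hx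
  exact hk _ (h.tau_tk ⟨hx.1.le, lt_of_le_of_ne (hx.2.trans ht.2) hx1⟩)

theorem dd_zero_const (h : TS A a M τ) {D : ℝ → E} (hD : ∀ t ∈ tsTk A, deltaDiffAt A D t 0) :
    D M = D a := by
  have hcont : ∀ t ∈ tsTk A, ContinuousWithinAt D A t := fun t ht => dd_cont (h.tk_sub ht) (hD t ht)
  have hder : ∀ x ∈ Ico a M, HasDerivWithinAt (fun x => D (τ x)) 0 (Ici x) x := by
    intro s hs
    obtain ⟨k1, k2, k3⟩ := h.tau s ⟨hs.1, hs.2.le⟩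
    have hk := h.tau_tk hs
    by_cases hlt : s < tsSigma A (τ s)
    · refine (hasDerivWithinAt_const s (Ici s) (D (τ s))).congr_of_eventuallyEq ?_ rfl
      filter_upwards [self_mem_nhdsWithin, mem_nhdsWithin_of_mem_nhds (Iio_mem_nhds hlt)] with x hx hx2
      show D (τ x) = D (τ s)
      rw [h.tau_gap k1 (k2.trans hx) hx2]
    · have hsp := h.sigma_spec k1
      have hσ : tsSigma A (τ s) = τ s := le_antisymm (k3 _ hsp.1 (not_lt.1 hlt)) hsp.2.1
      have hts : τ s = s := by
        by_contra hne
        have : τ s < s := lt_of_le_of_ne k2 hne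
        obtain ⟨u, hu, h1, h2⟩ := (h.sigma_mem_of_lt (this.trans hs.2)).2.2.2 s (by rwa [hσ])
        exact absurd (k3 u hu h2.le) (not_le.2 h1)
      rw [hts] at hσ hk
      have hsA := h.tk_sub hk
      rw [hasDerivWithinAt_iff_isLittleO, Asymptotics.isLittleO_iff]
      intro ε hε
      obtain ⟨δ, hδ, hd⟩ := hD s hk ε hε
      filter_upwards [self_mem_nhdsWithin, mem_nhdsWithin_of_mem_nhds (Iio_mem_nhds hs.2),
        mem_nhdsWithin_of_mem_nhds (Iio_mem_nhds (show s < s + δ by linarith))] with x hx hx2 hx3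
      have hx : s ≤ x := hx
      have hx3 : x < s + δ := hx3
      have hb := h.tau_between hsA hx (le_of_lt hx2)
      have := hd (τ x) ⟨h.tk_sub (h.tau_tk ⟨hs.1.trans hx, hx2⟩), by constructor <;> linarith⟩
      rw [hσ, smul_zero, sub_zero] at this
      rw [smul_zero, sub_zero, hts, norm_sub_rev]
      refine this.trans ?_
      gcongr
      rw [abs_sub_comm, Real.norm_eq_abs, abs_of_nonneg (by linarith), abs_of_nonneg (by linarith)]
      linarith
  have hleft : ∀ x ∈ Ioc a M, ContinuousWithinAt (fun x => D (τ x)) (Iio x) x := by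
    intro s hs
    obtain ⟨k1, k2, k3⟩ := h.tau s ⟨hs.1.le, hs.2⟩
    rcases k2.lt_or_eq with hlt | heq
    · refine tendsto_const_nhds.congr' ?_
      filter_upwards [self_mem_nhdsWithin, mem_nhdsWithin_of_mem_nhds (Ioi_mem_nhds hlt)] with x hx hx2
      have hx : x < s := hx
      have hx2 : τ s < x := hx2
      obtain ⟨q1, q2, q3⟩ := h.tau x ⟨(h.sub k1).1.trans hx2.le, hx.le.trans hs.2⟩
      have : τ s = τ x := le_antisymm (q3 _ k1 hx2.le) (k3 _ q1 (q2.trans hx.le))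
      rw [this]
    · have hsA : s ∈ A := heq ▸ k1
      show Tendsto _ _ (𝓝 (D (τ s)))
      rw [heq]
      by_cases hden : ∀ y < s, ∃ u ∈ A, u < s ∧ y < u
      · have hsk : s ∈ tsTk A := by
          rw [h.tk_eq]
          refine ⟨hsA, ?_⟩
          by_contra hc
          obtain ⟨u, hu, h1, h2⟩ := hden _ (not_le.1 hc)
          exact absurd (h.rho_spec.2.2.1 u hu (h1.trans_le hs.2)) (not_le.2 h2)
        refine (hcont s hsk).tendsto.comp ?_
        rw [tendsto_nhdsWithin_iff]
        constructor
        · rw [tendsto_order]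
          constructor
          · intro y hy
            obtain ⟨u, hu, h1, h2⟩ := hden y hy
            filter_upwards [self_mem_nhdsWithin, mem_nhdsWithin_of_mem_nhds (Ioi_mem_nhds h1)] with x hx hx2
            have hx : x < s := hx
            exact h2.trans_le (h.tau_between hu (le_of_lt hx2) (hx.le.trans hs.2)).1
          · intro y hy
            filter_upwards [self_mem_nhdsWithin, mem_nhdsWithin_of_mem_nhds (Ioi_mem_nhds hs.1)] with x hx hx2
            have hx : x < s := hx
            exact (h.tau_between h.ha (le_of_lt hx2) (hx.le.trans hs.2)).2.trans_lt (hx.trans hy)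
        · filter_upwards [self_mem_nhdsWithin, mem_nhdsWithin_of_mem_nhds (Ioi_mem_nhds hs.1)] with x hx hx2
          have hx : x < s := hx
          exact (h.tau x ⟨le_of_lt hx2, hx.le.trans hs.2⟩).1
      · push Not at hden
        obtain ⟨y, hy, hyd⟩ := hden
        refine tendsto_const_nhds.congr' ?_
        filter_upwards [self_mem_nhdsWithin, mem_nhdsWithin_of_mem_nhds (Ioi_mem_nhds hs.1),
          mem_nhdsWithin_of_mem_nhds (Ioi_mem_nhds hy)] with x hx hx2 hx3
        have hx : x < s := hx
        have hx3 : y < x := hx3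
        obtain ⟨q1, q2, q3⟩ := h.tau x ⟨le_of_lt hx2, hx.le.trans hs.2⟩
        have hlt : τ x < s := q2.trans_lt hx
        have hxM : τ x < M := hlt.trans_le hs.2
        have hsx : tsSigma A (τ x) = s := by
          have hsp := h.sigma_mem_of_lt hxM
          refine le_antisymm (hsp.2.2.1 s hsA hlt) ?_
          by_contra hc
          obtain ⟨u, hu, h1, h2⟩ := hsp.2.2.2 s (not_le.1 hc)
          have : u ≤ x := (hyd u hu h2).trans hx3.le
          exact absurd (q3 u hu this) (not_le.2 h1)
        have := dd_sigma q1 (hD _ (h.mem_tk q1 hxM))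
        rw [hsx, smul_zero, add_zero] at this
        exact this
  have hC : ContinuousOn (fun x => D (τ x)) (Icc a M) := by
    intro x hx
    have hr : ContinuousWithinAt (fun x => D (τ x)) (Icc a M ∩ Ici x) x := by
      rcases hx.2.lt_or_eq with hlt | rfl
      · exact ((hder x ⟨hx.1, hlt⟩).continuousWithinAt).mono inter_subset_right
      · refine (continuousWithinAt_singleton).mono ?_
        rintro y ⟨hy1, hy2⟩
        exact le_antisymm hy1.2 hy2
    have hl : ContinuousWithinAt (fun x => D (τ x)) (Icc a M ∩ Iio x) x := by
      rcases hx.1.lt_or_eq with hlt | rfl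
      · exact (hleft x ⟨hlt, hx.2⟩).mono inter_subset_right
      · have : Icc a M ∩ Iio a = ∅ := by
          ext y; simp only [mem_inter_iff, mem_Icc, mem_Iio, mem_empty_iff_false]
          constructor
          · rintro ⟨⟨h1, _⟩, h2⟩; linarith
          · exact False.elim
        rw [this]
        simp [ContinuousWithinAt]
    have := hl.union hr
    rwa [← inter_union_distrib_left, Iio_union_Ici, inter_univ] at this
  have := constant_of_has_deriv_right_zero hC hder M ⟨h.lt.le, le_rfl⟩
  simpa [h.tau_eq h.hM, h.tau_eq h.ha] using this

theorem tI_ftc [CompleteSpace E] (h : TS A a M τ) {U u : ℝ → E} (hu : RW A u)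
    (hU : ∀ t ∈ tsTk A, deltaDiffAt A U t (u t)) : U M - U a = tI a τ u M := by
  have := dd_zero_const h (D := fun x => U x + (-1 : ℝ) • tI a τ u x) (fun t ht => by
    have := dd_add (hU t ht) (dd_smul (-1) (tI_dd h hu ht))
    simpa using this)
  simp only [tI_a, smul_zero, add_zero] at this
  rw [← this]; module

theorem dd_zero_unique (h : TS A a M τ) {D : ℝ → E} {t : ℝ} {d : E} (ht : t ∈ tsTk A)
    (hD : deltaDiffAt A D t d) (h0 : ∀ x ∈ A, D x = 0) : d = 0 := by
  have htA := h.tk_sub ht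
  have hsp := h.sigma_spec htA
  rw [← norm_le_zero_iff]
  apply le_of_forall_pos_le_add
  intro ε hε
  rw [zero_add]
  obtain ⟨δ, hδ, hd⟩ := hD ε hε
  have : ∃ s ∈ A ∩ Ioo (t - δ) (t + δ), s ≠ tsSigma A t := by
    by_cases hσ : tsSigma A t = t
    · rw [hσ]
      rcases (h.sub htA).2.lt_or_eq with hlt | rfl
      · obtain ⟨u, hu, h1, h2⟩ := (h.sigma_mem_of_lt hlt).2.2.2 (t + δ) (by linarith)
        exact ⟨u, ⟨hu, by linarith, h2⟩, h1.ne'⟩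
      · obtain ⟨u, hu, h1, h2⟩ := h.dense_of_M ht (x := t - δ) (by linarith)
        exact ⟨u, ⟨hu, h2, by linarith⟩, h1.ne⟩
    · exact ⟨t, ⟨htA, by linarith, by linarith⟩, Ne.symm hσ⟩
  obtain ⟨s, hs, hne⟩ := this
  have := hd s hs
  rw [h0 _ hsp.1, h0 _ hs.1, sub_zero, zero_sub, norm_neg, norm_smul, Real.norm_eq_abs, mul_comm] at this
  exact le_of_mul_le_mul_right this (abs_pos.2 (sub_ne_zero.2 hne.symm))

theorem tI_pos (h : TS A a M τ) {φ : ℝ → ℝ} (hφ : RW A φ) (h0 : ∀ t ∈ tsTk A, 0 ≤ φ t)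
    (hI : tI a τ φ M = 0) {t : ℝ} (ht : t ∈ tsTk A) : φ t = 0 := by
  refine dd_zero_unique h ht (tI_dd h hφ ht) ?_
  have key : ∀ x ∈ Icc a M, ∀ y ∈ Icc a M, x ≤ y → 0 ≤ tI a τ φ y - tI a τ φ x := by
    intro x hx y hy hxy
    rw [tI_sub h hφ hx hy]
    refine intervalIntegral.integral_nonneg_of_ae_restrict hxy ?_
    filter_upwards [ae_restrict_of_ae (ae_ne M), ae_restrict_mem measurableSet_Icc] with z hz1 hz
    exact h0 _ (h.tau_tk ⟨hx.1.trans hz.1, lt_of_le_of_ne (hz.2.trans hy.2) hz1⟩)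
  intro x hx
  have hx := h.sub hx
  have k1 := key a ⟨le_rfl, h.lt.le⟩ x hx hx.1
  have k2 := key x hx M ⟨h.lt.le, le_rfl⟩ hx.2
  rw [tI_a] at k1
  rw [hI] at k2
  linarith

end tIsec

def NN {E : Type*} [NormedAddCommGroup E] [NormedSpace ℝ E] (a : ℝ) (τ : ℝ → ℝ) (r : ℕ)
    (η : ℝ → E) (i : ℕ) : ℝ → E := (tI a τ)^[r - i] η

section NNsec
variable {E : Type*} [NormedAddCommGroup E] [NormedSpace ℝ E] [CompleteSpace E]
  {a : ℝ} {τ : ℝ → ℝ} {r : ℕ} {S : ℕ → Set ℝ} {M : ℕ → ℝ} {η : ℝ → E}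


theorem NN_self : NN a τ r η r = η := by simp [NN]

theorem NN_succ {i : ℕ} (hi : i < r) : NN a τ r η i = tI a τ (NN a τ r η (i + 1)) := by
  unfold NN
  have : r - i = (r - (i + 1)) + 1 := by omega
  rw [this, Function.iterate_succ_apply']

theorem S_mono (hS : ∀ i < r, TS (S i) a (M i) τ) (hSS : ∀ i, S (i + 1) = tsTk (S i))
    {i : ℕ} (hi : i ≤ r) : S r ⊆ S i := by
  induction r, hi using Nat.le_induction with
  | base => exact subset_rfl
  | succ k hk ih =>
    rw [hSS k]
    exact (hS k (by omega)).tk_sub.trans (ih fun i hi => hS i (by omega))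

theorem NN_RW (hS : ∀ i < r, TS (S i) a (M i) τ) (hSS : ∀ i, S (i + 1) = tsTk (S i))
    (hη : RdContinuousOn (S r) η) : ∀ j i, i + j + 1 = r → RW (S i) (NN a τ r η (i + 1)) := by
  intro j
  induction j with
  | zero =>
    intro i hi
    have hi : i + 1 = r := by omega
    rw [hi, NN_self]
    refine RW.of_rd (hS i (by omega)) ?_
    rw [← hSS, hi]; exact hη
  | succ j ih =>
    intro i hi
    have h1 := ih (i + 1) (by omega)
    rw [NN_succ (by omega)]
    have h2 := hS (i + 1) (by omega)
    refine RW.of_cont ?_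
    rw [← hSS]
    exact (tI_cont h2 h1).mono h2.sub

theorem NN_RW' (hS : ∀ i < r, TS (S i) a (M i) τ) (hSS : ∀ i, S (i + 1) = tsTk (S i))
    (hη : RdContinuousOn (S r) η) {i : ℕ} (hi : i < r) : RW (S i) (NN a τ r η (i + 1)) :=
  NN_RW hS hSS hη (r - 1 - i) i (by omega)

theorem NN_dd (hS : ∀ i < r, TS (S i) a (M i) τ) (hSS : ∀ i, S (i + 1) = tsTk (S i))
    (hη : RdContinuousOn (S r) η) {i : ℕ} (hi : i < r) {t : ℝ} (ht : t ∈ S (i + 1)) :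
    deltaDiffAt (S i) (NN a τ r η i) t (NN a τ r η (i + 1) t) := by
  rw [NN_succ hi]
  rw [hSS] at ht
  exact tI_dd (hS i hi) (NN_RW' hS hSS hη hi) ht

theorem NN_RWtop {k : ℕ} (hS : ∀ i < k + 1, TS (S i) a (M i) τ) (hSS : ∀ i, S (i + 1) = tsTk (S i))
    (hη : RdContinuousOn (S (k + 1)) η) {i : ℕ} (hi : i ≤ k + 1) :
    RW (S k) (NN a τ (k + 1) η i) := by
  rcases hi.lt_or_eq with hlt | rfl
  · refine RW.of_cont ?_
    rw [NN_succ hlt, ← hSS]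
    refine (tI_cont (hS i hlt) (NN_RW' hS hSS hη hlt)).mono ?_
    exact (S_mono hS hSS hi).trans (hS i hlt).sub
  · exact NN_RW' hS hSS hη (Nat.lt_succ_self k)

theorem NN_ddtop {k : ℕ} (hS : ∀ i < k + 1, TS (S i) a (M i) τ) (hSS : ∀ i, S (i + 1) = tsTk (S i))
    (hη : RdContinuousOn (S (k + 1)) η) {i : ℕ} (hi : i < k + 1) {t : ℝ} (ht : t ∈ tsTk (S k)) :
    deltaDiffAt (S k) (NN a τ (k + 1) η i) t (NN a τ (k + 1) η (i + 1) t) := by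
  rw [NN_succ hi]
  exact tI_dd (hS k (by omega)) (NN_RWtop hS hSS hη (by omega)) ht

theorem NN_a {i : ℕ} (hi : i < r) : NN a τ r η i a = 0 := by
  rw [NN_succ hi, tI_a]

theorem NN_lin (hS : ∀ i < r, TS (S i) a (M i) τ) (hSS : ∀ i, S (i + 1) = tsTk (S i))
    {ζ ξ : ℝ → E} (c : ℝ) (hζ : RdContinuousOn (S r) ζ) (hξ : RdContinuousOn (S r) ξ)
    (he : ∀ t ∈ S r, η t = ζ t + c • ξ t) :
    ∀ j i, i + j = r → ∀ t ∈ S i, NN a τ r η i t = NN a τ r ζ i t + c • NN a τ r ξ i t := by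
  intro j
  induction j with
  | zero =>
    intro i hi
    have hi : i = r := by omega
    subst hi
    simpa [NN_self] using he
  | succ j ih =>
    intro i hi t ht
    have hlt : i < r := by omega
    have h1 := ih (i + 1) (by omega)
    rw [NN_succ hlt, NN_succ hlt, NN_succ hlt]
    refine tI_lin (hS i hlt) c (NN_RW' hS hSS hζ hlt) (NN_RW' hS hSS hξ hlt) ?_ ((hS i hlt).sub ht)
    rw [← hSS]; exact h1

end NNsec

section rd
variable {E : Type*} [NormedAddCommGroup E] [NormedSpace ℝ E] {S : Set ℝ} {f g : ℝ → E}

theorem rd_add (hf : RdContinuousOn S f) (hg : RdContinuousOn S g) :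
    RdContinuousOn S (fun t => f t + g t) := by
  intro t ht
  refine ⟨fun h => ((hf t ht).1 h).add ((hg t ht).1 h), fun h => ?_⟩
  obtain ⟨l, hl⟩ := (hf t ht).2 h
  obtain ⟨m, hm⟩ := (hg t ht).2 h
  exact ⟨l + m, hl.add hm⟩

theorem rd_smul (c : ℝ) (hf : RdContinuousOn S f) :
    RdContinuousOn S (fun t => c • f t) := by
  intro t ht
  refine ⟨fun h => ((hf t ht).1 h).const_smul c, fun h => ?_⟩
  obtain ⟨l, hl⟩ := (hf t ht).2 h
  exact ⟨c • l, hl.const_smul c⟩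

theorem rd_const (c : E) : RdContinuousOn S (fun _ => c) := fun t _ =>
  ⟨fun _ => continuousWithinAt_const, fun _ => ⟨c, tendsto_const_nhds⟩⟩

theorem rd_theta {A : Set ℝ} {a M : ℝ} {τ : ℝ → ℝ} (h : TS A a M τ) (hg : RW A g) :
    RdContinuousOn (tsTk A) (fun t => (tsRho A M - t) • g t) := by
  intro t ht
  set m := tsRho A M with hm
  have hmem : ∀ x, x ∈ tsTk A ↔ x ∈ A ∧ x ≤ m := by
    intro x; rw [h.tk_eq]; rfl
  have hmk : m ∈ tsTk A := (hmem m).2 ⟨h.rho_spec.1, le_rfl⟩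
  obtain ⟨C, hC0, hC⟩ := hg.bdd h
  obtain ⟨g1, l, g2⟩ := hg t ht
  constructor
  · intro hσ
    rcases ((hmem t).1 ht).2.lt_or_eq with hlt | heq
    · have hσA : tsSigma A t = t := by
        have hne : ({s | s ∈ tsTk A ∧ t < s}).Nonempty := ⟨m, hmk, hlt⟩
        unfold tsSigma at hσ
        rw [if_pos hne] at hσ
        have hsp := h.sigma_spec (h.tk_sub ht)
        refine le_antisymm ?_ hsp.2.1
        apply le_of_forall_gt_imp_ge_of_dense
        intro x hx
        obtain ⟨u, hu, hux⟩ := exists_lt_of_csInf_lt hne (by rw [hσ]; exact hx)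
        exact (hsp.2.2 u (h.tk_sub hu.1) hu.2).trans hux.le
      exact ContinuousWithinAt.smul (Continuous.continuousWithinAt (by fun_prop)) (g1 hσA)
    · show Tendsto _ _ (𝓝 ((m - t) • g t))
      rw [heq, sub_self, zero_smul]
      refine squeeze_zero_norm' (a := fun x => |m - x| * C) ?_ ?_
      · filter_upwards [self_mem_nhdsWithin] with x hx
        rw [norm_smul, Real.norm_eq_abs]
        gcongr
        exact hC x hx
      · have : Continuous (fun x : ℝ => |m - x| * C) := by fun_prop
        have := (this.tendsto m).mono_left (nhdsWithin_le_nhds (s := tsTk A))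
        simpa using this
  · intro _
    refine ⟨(m - t) • l, Tendsto.smul ?_ g2⟩
    have : Continuous (fun x : ℝ => m - x) := by fun_prop
    exact (this.tendsto t).mono_left nhdsWithin_le_nhds

theorem dd_sum {t : ℝ} {F : ℕ → ℝ → E} {D : ℕ → E} (k : ℕ)
    (hF : ∀ i < k, deltaDiffAt S (F i) t (D i)) :
    deltaDiffAt S (fun x => ∑ i ∈ Finset.range k, F i x) t (∑ i ∈ Finset.range k, D i) := by
  induction k with
  | zero => simpa using dd_const (S := S) (t := t) (0 : E)
  | succ k ih =>
    simp only [Finset.sum_range_succ]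
    exact dd_add (ih fun i hi => hF i (by omega)) (hF k (by omega))

end rd

section core
variable {n k : ℕ} {a : ℝ} {τ : ℝ → ℝ} {S : ℕ → Set ℝ} {M : ℕ → ℝ}

def VV (n : ℕ) (S : Set ℝ) : Submodule ℝ (ℝ → En n) where
  carrier := {η | RdContinuousOn S η}
  zero_mem' := rd_const 0
  add_mem' := fun h1 h2 => rd_add h1 h2
  smul_mem' := fun c _ h => rd_smul c h

theorem mkLin {W : Submodule ℝ (ℝ → En n)} (F : (ℝ → En n) → ℝ)
    (hF : ∀ ζ ∈ W, ∀ ξ ∈ W, ∀ c : ℝ, F (fun t => ζ t + c • ξ t) = F ζ + c * F ξ) :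
    ∃ ℓ : W →ₗ[ℝ] ℝ, ∀ v : W, ℓ v = F v.1 := by
  refine ⟨{ toFun := fun v => F v.1, map_add' := ?_, map_smul' := ?_ }, fun v => rfl⟩
  · intro u v
    have := hF u.1 u.2 v.1 v.2 1
    simp only [one_smul, one_mul] at this
    exact this
  · intro c u
    have := hF u.1 u.2 u.1 u.2 (c - 1)
    have e : (fun t => u.1 t + (c - 1) • u.1 t) = c • u.1 := by
      funext t; simp only [Pi.smul_apply]; module
    rw [e] at this
    show F (c • u.1) = c * F u.1
    rw [this]; ring

def LamI (a : ℝ) (τ : ℝ → ℝ) (k : ℕ) (Ai : ℕ → ℝ → En n) (η : ℝ → En n) (t : ℝ) : ℝ :=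
  ∑ i ∈ Finset.range (k + 2), inner ℝ (Ai i t) (NN a τ (k + 1) η i t)

theorem LamI_RW (hS : ∀ i < k + 1, TS (S i) a (M i) τ) (hSS : ∀ i, S (i + 1) = tsTk (S i))
    {Ai : ℕ → ℝ → En n} (hA : ∀ i < k + 2, RW (S k) (Ai i)) {η : ℝ → En n}
    (hη : RdContinuousOn (S (k + 1)) η) : RW (S k) (LamI a τ k Ai η) := by
  unfold LamI
  refine RW.sum _ fun i hi => ?_
  rw [Finset.mem_range] at hi
  exact (hA i hi).innerP (NN_RWtop hS hSS hη (by omega))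

theorem dual (hS : ∀ i < k + 1, TS (S i) a (M i) τ) (hSS : ∀ i, S (i + 1) = tsTk (S i))
    {Ai : ℕ → ℝ → En n} (hA : ∀ i < k + 2, RW (S k) (Ai i))
    (h0 : ∀ η : ℝ → En n, RdContinuousOn (S (k + 1)) η →
      (∀ i < k + 1, NN a τ (k + 1) η i (M k) = 0) → tI a τ (LamI a τ k Ai η) (M k) = 0) :
    ∃ c : ℕ → En n, ∀ η : ℝ → En n, RdContinuousOn (S (k + 1)) η →
      tI a τ (LamI a τ k Ai η) (M k)
        = ∑ i ∈ Finset.range (k + 1), inner ℝ (c i) (NN a τ (k + 1) η i (M k)) := by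
  have hk := hS k (by omega)
  have hmem : ∀ i < k + 1, M k ∈ S i := fun i hi =>
    S_mono (r := k) (fun i hi => hS i (by omega)) hSS (by omega) hk.hM
  have l1 : ∀ p : Fin (k + 1) × Fin n, ∃ ℓ : VV n (S (k + 1)) →ₗ[ℝ] ℝ,
      ∀ v : VV n (S (k + 1)), ℓ v = (NN a τ (k + 1) v.1 p.1 (M k)) p.2 := by
    intro p
    refine mkLin (fun η => (NN a τ (k + 1) η p.1 (M k)) p.2) ?_
    intro ζ hζ ξ hξ c
    have := NN_lin hS hSS (η := fun t => ζ t + c • ξ t) c hζ hξ (fun _ _ => rfl) (k + 1 - p.1) p.1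
      (by omega) (M k) (hmem _ p.1.2)
    simp only [this, PiLp.add_apply, PiLp.smul_apply, smul_eq_mul]
  choose ℓ hℓ using l1
  obtain ⟨K, hK⟩ : ∃ K : VV n (S (k + 1)) →ₗ[ℝ] ℝ,
      ∀ v : VV n (S (k + 1)), K v = tI a τ (LamI a τ k Ai v.1) (M k) := by
    refine mkLin (fun η => tI a τ (LamI a τ k Ai η) (M k)) ?_
    intro ζ hζ ξ hξ c
    refine tI_lin hk c (LamI_RW hS hSS hA hζ) (LamI_RW hS hSS hA hξ) ?_ ⟨hk.lt.le, le_rfl⟩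
    intro t ht
    rw [← hSS] at ht
    unfold LamI
    rw [smul_eq_mul, Finset.mul_sum, ← Finset.sum_add_distrib]
    refine Finset.sum_congr rfl fun i hi => ?_
    rw [Finset.mem_range] at hi
    rw [NN_lin hS hSS (η := fun t => ζ t + c • ξ t) c hζ hξ (fun _ _ => rfl) (k + 1 - i) i
      (by omega) t (S_mono hS hSS (by omega) ht), inner_add_right, inner_smul_right]
  have hker : ⨅ p, (ℓ p).ker ≤ K.ker := by
    intro v hv
    rw [Submodule.mem_iInf] at hv
    rw [LinearMap.mem_ker, hK]
    refine h0 v.1 v.2 ?_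
    intro i hi
    ext j
    have := hv (⟨i, hi⟩, j)
    rw [LinearMap.mem_ker, hℓ] at this
    simpa using this
  obtain ⟨c, hc⟩ := (Submodule.mem_span_range_iff_exists_fun ℝ).1 (mem_span_of_iInf_ker_le_ker hker)
  refine ⟨fun i => if hi : i < k + 1 then WithLp.toLp 2 (fun j => c (⟨i, hi⟩, j)) else 0, ?_⟩
  intro η hη
  have hmm : η ∈ VV n (S (k + 1)) := hη
  obtain ⟨v, hv⟩ : ∃ v : VV n (S (k + 1)), v.1 = η := ⟨⟨η, hmm⟩, rfl⟩
  have := hK v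
  rw [hv] at this
  rw [← this, ← hc, LinearMap.sum_apply, Finset.sum_range, Fintype.sum_prod_type]
  refine Finset.sum_congr rfl fun i _ => ?_
  have e : (if hi : (i : ℕ) < k + 1 then WithLp.toLp 2 (fun j => c (⟨i, hi⟩, j)) else (0 : En n))
      = WithLp.toLp 2 (fun j => c (i, j)) := dif_pos i.2
  beta_reduce
  rw [e, PiLp.inner_apply]
  refine Finset.sum_congr rfl fun j _ => ?_
  rw [LinearMap.smul_apply, hℓ, hv]
  simp [mul_comm]

def pint {E : Type*} [NormedAddCommGroup E] [NormedSpace ℝ E] (a : ℝ) (τ : ℝ → ℝ) (β : ℝ)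
    (c : E) (q : ℝ → E) (t : ℝ) : E := (-c + tI a τ q β) + (-1 : ℝ) • tI a τ q t

def PP (a : ℝ) (τ : ℝ → ℝ) (A : Set ℝ) (β : ℝ) (Ai : ℕ → ℝ → En n) (c : ℕ → En n) :
    ℕ → ℝ → En n
  | 0 => pint a τ β (c 0) (Ai 0)
  | i + 1 => pint a τ β (c (i + 1)) (fun t => Ai (i + 1) t + PP a τ A β Ai c i (tsSigma A t))

def Pd (a : ℝ) (τ : ℝ → ℝ) (A : Set ℝ) (β : ℝ) (Ai : ℕ → ℝ → En n) (c : ℕ → En n) :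
    ℕ → ℝ → En n
  | 0 => fun t => - Ai 0 t
  | i + 1 => fun t => - Ai (i + 1) t - PP a τ A β Ai c i (tsSigma A t)

theorem PP_spec {A : Set ℝ} {β : ℝ} (h : TS A a β τ) {Ai : ℕ → ℝ → En n} {m : ℕ}
    (hA : ∀ i < m, RW A (Ai i)) (c : ℕ → En n) : ∀ i < m,
    ContinuousOn (PP a τ A β Ai c i) A ∧ PP a τ A β Ai c i β = - c i ∧
    ∀ t ∈ tsTk A, deltaDiffAt A (PP a τ A β Ai c i) t (Pd a τ A β Ai c i t) := by
  have key : ∀ (q : ℝ → En n) (c : En n), RW A q →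
      ContinuousOn (pint a τ β c q) A ∧ pint a τ β c q β = - c ∧
      ∀ t ∈ tsTk A, deltaDiffAt A (pint a τ β c q) t (- q t) := by
    intro q c hq
    refine ⟨?_, ?_, ?_⟩
    · have h1 : ContinuousOn (fun t => (-1 : ℝ) • tI a τ q t) A :=
        ((tI_cont h hq).mono h.sub).const_smul (-1 : ℝ)
      exact continuousOn_const.add h1
    · unfold pint; module
    · intro t ht
      have := dd_add (dd_const (S := A) (t := t) (-c + tI a τ q β)) (dd_smul (-1) (tI_dd h hq ht))
      have e : (0 : En n) + (-1 : ℝ) • q t = - q t := by simp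
      rw [e] at this
      exact this
  intro i
  induction i with
  | zero => intro hi; exact key _ _ (hA 0 hi)
  | succ i ih =>
    intro hi
    have h1 := (ih (by omega)).1
    have h2 := key _ (c (i + 1)) ((hA (i + 1) hi).add (RW.comp_sigma h h1))
    refine ⟨h2.1, h2.2.1, fun t ht => ?_⟩
    have := h2.2.2 t ht
    rw [neg_add'] at this
    exact this

theorem tele {A : Set ℝ} {β : ℝ} {Ai : ℕ → ℝ → En n} {c : ℕ → En n} (N : ℕ → En n) (t : ℝ) (k : ℕ) :
    ∑ i ∈ Finset.range (k + 1), (inner ℝ (N (i + 1)) (PP a τ A β Ai c i (tsSigma A t)) +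
      inner ℝ (N i) (Pd a τ A β Ai c i t)) =
    inner ℝ (N (k + 1)) (PP a τ A β Ai c k (tsSigma A t)) -
      ∑ i ∈ Finset.range (k + 1), inner ℝ (Ai i t) (N i) := by
  induction k with
  | zero => simp [Pd, real_inner_comm]; ring
  | succ k ih =>
    rw [Finset.sum_range_succ, ih, Finset.sum_range_succ _ (k + 1)]
    simp only [Pd, inner_sub_right, inner_neg_right]
    rw [real_inner_comm (N (k + 1)) (Ai (k + 1) t)]
    ring

theorem core (hS : ∀ i < k + 1, TS (S i) a (M i) τ) (hSS : ∀ i, S (i + 1) = tsTk (S i))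
    {Ai : ℕ → ℝ → En n} (hA : ∀ i < k + 2, RW (S k) (Ai i))
    (h0 : ∀ η : ℝ → En n, RdContinuousOn (S (k + 1)) η →
      (∀ i < k + 1, NN a τ (k + 1) η i (M k) = 0) → tI a τ (LamI a τ k Ai η) (M k) = 0) :
    ∃ c : ℕ → En n, ∀ t ∈ tsTk (S k),
      PP a τ (S k) (M k) Ai c k (tsSigma (S k) t) = - Ai (k + 1) t := by
  obtain ⟨c, hc⟩ := dual hS hSS hA h0
  refine ⟨c, ?_⟩
  have hk := hS k (by omega)
  have hP := PP_spec hk hA c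
  set P := PP a τ (S k) (M k) Ai c with hPdef
  set g : ℝ → En n := fun t => P k (tsSigma (S k) t) + Ai (k + 1) t with hg
  have hgRW : RW (S k) g := (RW.comp_sigma hk (hP k (by omega)).1).add (hA (k + 1) (by omega))
  have orth : ∀ η : ℝ → En n, RdContinuousOn (S (k + 1)) η →
      tI a τ (fun t => inner ℝ (η t) (g t)) (M k) = 0 := by
    intro η hη
    have hηRW : RW (S k) η := by
      have := NN_RWtop hS hSS hη (i := k + 1) le_rfl
      rwa [NN_self] at this
    set u : ℝ → ℝ := fun t => inner ℝ (η t) (P k (tsSigma (S k) t)) -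
      ∑ i ∈ Finset.range (k + 1), inner ℝ (Ai i t) (NN a τ (k + 1) η i t) with hu
    have huRW : RW (S k) u := by
      have h1 : RW (S k) (fun t => inner ℝ (η t) (P k (tsSigma (S k) t))) :=
        hηRW.innerP (RW.comp_sigma hk (hP k (by omega)).1)
      have h2 : RW (S k) (fun t => ∑ i ∈ Finset.range (k + 1),
          inner ℝ (Ai i t) (NN a τ (k + 1) η i t)) := by
        refine RW.sum _ fun i hi => ?_
        rw [Finset.mem_range] at hi
        exact (hA i (by omega)).innerP (NN_RWtop hS hSS hη (by omega))
      have := h1.add (h2.smul (-1))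
      convert this using 2
      rw [hu]; simp [sub_eq_add_neg]
    have hftc := tI_ftc hk (U := fun t => ∑ i ∈ Finset.range (k + 1),
      inner ℝ (NN a τ (k + 1) η i t) (P i t)) huRW (by
        intro t ht
        have := dd_sum (S := S k) (t := t) (F := fun i t => inner ℝ (NN a τ (k + 1) η i t) (P i t))
          (D := fun i => inner ℝ (NN a τ (k + 1) η (i + 1) t) (P i (tsSigma (S k) t)) +
            inner ℝ (NN a τ (k + 1) η i t) (Pd a τ (S k) (M k) Ai c i t)) (k + 1) (by
            intro i hi
            exact dd_inner (hk.tk_sub ht) (NN_ddtop hS hSS hη hi ht) ((hP i (by omega)).2.2 t ht))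
        have ht' := tele (a := a) (τ := τ) (A := S k) (β := M k) (Ai := Ai) (c := c)
          (fun i => NN a τ (k + 1) η i t) t k
        rw [ht', NN_self] at this
        exact this)
    have ea : ∑ i ∈ Finset.range (k + 1), inner ℝ (NN a τ (k + 1) η i a) (P i a) = (0 : ℝ) := by
      refine Finset.sum_eq_zero fun i hi => ?_
      rw [Finset.mem_range] at hi
      rw [NN_a hi, inner_zero_left]
    have eM : ∑ i ∈ Finset.range (k + 1), inner ℝ (NN a τ (k + 1) η i (M k)) (P i (M k))
        = - tI a τ (LamI a τ k Ai η) (M k) := by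
      rw [hc η hη, ← Finset.sum_neg_distrib]
      refine Finset.sum_congr rfl fun i hi => ?_
      rw [Finset.mem_range] at hi
      rw [(hP i (by omega)).2.1, inner_neg_right, real_inner_comm]
    simp only [ea, eM, sub_zero] at hftc
    have := tI_lin hk (k := fun t => inner ℝ (η t) (g t)) 1 huRW (LamI_RW hS hSS hA hη) (by
      intro t ht
      simp only [hu, hg, LamI, one_smul]
      rw [Finset.sum_range_succ _ (k + 1), NN_self, inner_add_right, real_inner_comm (Ai (k + 1) t)]
      ring) (t := M k) ⟨hk.lt.le, le_rfl⟩
    rw [this, ← hftc]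
    simp
  set m := tsRho (S k) (M k) with hm
  have step1 : ∀ t ∈ tsTk (S k), t < m → g t = 0 := by
    intro t ht htm
    have hθ := rd_theta hk hgRW
    have h1 := orth _ (by rw [hSS]; exact hθ)
    have := tI_pos hk ((RW.of_rd hk hθ).innerP hgRW) (by
      intro s hs
      rw [hk.tk_eq] at hs
      rw [real_inner_smul_left]
      have : 0 ≤ m - s := sub_nonneg.2 hs.2
      exact mul_nonneg this real_inner_self_nonneg) h1 ht
    rw [real_inner_smul_left] at this
    rcases mul_eq_zero.1 this with h2 | h2
    · exact absurd h2 (by rw [← hm]; linarith)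
    · exact inner_self_eq_zero.1 h2
  have step2 : ∀ t ∈ tsTk (S k), g t = 0 := by
    intro t ht
    have htm : t ≤ m := by rw [hk.tk_eq] at ht; exact ht.2
    rcases htm.lt_or_eq with hlt | heq
    · exact step1 t ht hlt
    · have h1 := orth (fun _ => g t) (rd_const _)
      have := tI_pos hk ((RW.of_cont (A := S k) (f := fun _ => g t) continuousOn_const).innerP hgRW) (by
        intro s hs
        have hsm : s ≤ t := by rw [hk.tk_eq] at hs; exact heq ▸ hs.2
        rcases hsm.lt_or_eq with h2 | h2
        · rw [step1 s hs (heq ▸ h2), inner_zero_right]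
        · rw [h2]; exact real_inner_self_nonneg) h1 ht
      exact inner_self_eq_zero.1 this
  intro t ht
  exact eq_neg_of_add_eq_zero_left (step2 t ht)

end core

section chain
variable {T : Set ℝ} {a b : ℝ} {τ : ℝ → ℝ}

theorem rho_inter {β : ℝ} : tsRho (T ∩ Iic β) β = tsRho T β := by
  have : {s | s ∈ T ∩ Iic β ∧ s < β} = {s | s ∈ T ∧ s < β} := by
    ext s
    simp only [mem_ofPred_eq, mem_inter_iff, mem_Iic]
    constructor
    · rintro ⟨⟨h1, _⟩, h2⟩; exact ⟨h1, h2⟩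
    · rintro ⟨h1, h2⟩; exact ⟨⟨h1, h2.le⟩, h2⟩
  unfold tsRho
  rw [this]

theorem chain (hT : TS T a b τ) (s : Finset ℝ) (hs : ↑s ⊆ T) : ∀ i, i + 2 ≤ s.card →
    (∃ s' : Finset ℝ, (↑s' : Set ℝ) ⊆ tsTk^[i] T ∧ s.card ≤ s'.card + i) ∧
    tsTk^[i] T = T ∩ Iic ((tsRho T)^[i] b) ∧ TS (tsTk^[i] T) a ((tsRho T)^[i] b) τ := by
  intro i
  induction i with
  | zero =>
    intro _
    refine ⟨⟨s, hs, le_rfl⟩, ?_, hT⟩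
    simp only [Function.iterate_zero, id]
    exact (inter_eq_left.2 fun x hx => (hT.sub hx).2).symm
  | succ i ih =>
    intro hi
    obtain ⟨⟨s', hs', hc'⟩, he, hTS⟩ := ih (by omega)
    rw [Function.iterate_succ_apply', Function.iterate_succ_apply']
    set A := tsTk^[i] T with hA
    set β := (tsRho T)^[i] b with hβ
    have hρ : tsRho A β = tsRho T β := by rw [he]; exact rho_inter
    have hsub : (↑(s'.erase β) : Set ℝ) ⊆ tsTk A := by
      intro x hx
      rw [Finset.mem_coe, Finset.mem_erase] at hx
      have hxA := hs' hx.2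
      exact hTS.mem_tk hxA (lt_of_le_of_ne (hTS.sub hxA).2 hx.1)
    have hcc : s.card ≤ (s'.erase β).card + (i + 1) := by
      have := Finset.pred_card_le_card_erase (s := s') (a := β)
      omega
    have hsp := hTS.rho_spec
    have htk := hTS.tk_eq
    rw [hρ] at hsp htk
    have hle : tsRho T β ≤ β := hsp.2.1
    refine ⟨⟨_, hsub, hcc⟩, ?_, ?_⟩
    · rw [htk, he, inter_assoc, Iic_inter_Iic, inf_eq_right.2 hle]
    · have hlt : a < tsRho T β := by
        obtain ⟨x, hx, hxa⟩ := Finset.exists_mem_ne (s := s'.erase β) (by omega) a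
        have := hsub hx
        rw [htk] at this
        exact lt_of_lt_of_le (lt_of_le_of_ne (hTS.sub this.1).1 (Ne.symm hxa)) this.2
      refine ⟨hTS.tk_closed, ?_, ?_, ?_, hlt, ?_⟩
      · rw [htk]; exact fun x hx => ⟨(hTS.sub hx.1).1, hx.2⟩
      · rw [htk]; exact ⟨hTS.ha, hlt.le⟩
      · rw [htk]; exact ⟨hsp.1, mem_Iic.2 le_rfl⟩
      · intro u hu
        obtain ⟨h1, h2, h3⟩ := hTS.tau u ⟨hu.1, hu.2.trans hle⟩
        rw [htk]
        exact ⟨⟨h1, h2.trans hu.2⟩, h2, fun v hv => h3 v hv.1⟩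

theorem sigma_min {A : Set ℝ} {β : ℝ} (hT : TS T a b τ) (hA : TS A a β τ) (he : A = T ∩ Iic β)
    {t : ℝ} (ht : t ∈ A) : tsSigma A t = min (tsSigma T t) β := by
  have hsub : A ⊆ T := by rw [he]; exact inter_subset_left
  have hβb : β ≤ b := (hT.sub (hsub hA.hM)).2
  rcases (hA.sub ht).2.lt_or_eq with hlt | rfl
  · obtain ⟨h1, h2, h3, h4⟩ := hA.sigma_mem_of_lt hlt
    obtain ⟨g1, g2, g3, g4⟩ := hT.sigma_mem_of_lt (hlt.trans_le hβb)
    have e1 : tsSigma T t ≤ tsSigma A t := by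
      by_contra hcon
      obtain ⟨u, hu, htu, hux⟩ := h4 _ (not_le.1 hcon)
      exact absurd (g3 u (hsub hu) htu) (not_le.2 hux)
    have e2 : tsSigma A t ≤ tsSigma T t := by
      by_contra hcon
      obtain ⟨u, hu, htu, hux⟩ := g4 _ (not_le.1 hcon)
      have huA : u ∈ A := by rw [he]; exact ⟨hu, hux.le.trans (hA.sub h1).2⟩
      exact absurd (h3 u huA htu) (not_le.2 hux)
    rw [le_antisymm e2 e1, min_eq_left]
    exact e1.trans (hA.sub h1).2
  · rw [hA.sigma_M, min_eq_right]
    exact (hT.sigma_spec (hsub ht)).2.1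

theorem TS_T {T₀ : Set ℝ} (hc : IsClosed T₀) (ha : a ∈ T₀) (hb : b ∈ T₀) (hab : a < b) :
    TS (Icc a b ∩ T₀) a b (fun s => sSup {u | u ∈ Icc a b ∩ T₀ ∧ u ≤ s}) := by
  have hcl : IsClosed (Icc a b ∩ T₀) := isClosed_Icc.inter hc
  refine ⟨hcl, inter_subset_left, ⟨⟨le_rfl, hab.le⟩, ha⟩, ⟨⟨hab.le, le_rfl⟩, hb⟩, hab, ?_⟩
  intro s hs
  have hbd : BddAbove {u | u ∈ Icc a b ∩ T₀ ∧ u ≤ s} := ⟨s, fun u hu => hu.2⟩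
  have hcl2 : IsClosed {u | u ∈ Icc a b ∩ T₀ ∧ u ≤ s} := hcl.inter isClosed_Iic
  have hm := hcl2.csSup_mem ⟨a, ⟨⟨le_rfl, hab.le⟩, ha⟩, hs.1⟩ hbd
  exact ⟨hm.1, hm.2, fun u hu hus => le_csSup hbd ⟨hu, hus⟩⟩

end chain

section firstvar

theorem grad_sum {n m : ℕ} {L : (Fin m → En n) → ℝ} {G : Fin m → En n} {X : Fin m → En n}
    (hL : DifferentiableAt ℝ L X)
    (hG : ∀ i, HasGradientAt (fun z => L (Function.update X i z)) (G i) (X i))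
    (H : Fin m → En n) : fderiv ℝ L X H = ∑ i, inner ℝ (G i) (H i) := by
  have e : H = ∑ i, Pi.single i (H i) := (Finset.univ_sum_single H).symm
  conv_lhs => rw [e, map_sum]
  refine Finset.sum_congr rfl fun i _ => ?_
  have h1 : HasFDerivAt L (fderiv ℝ L X) (Function.update X i (X i)) := by
    rw [Function.update_eq_self]; exact hL.hasFDerivAt
  have h2 := h1.comp (X i) (hasFDerivAt_update X (X i))
  have h3 := (hG i).hasFDerivAt.unique h2
  have h4 := congrArg (fun f => f (H i)) h3
  simp only [InnerProductSpace.toDual_apply_apply, ContinuousLinearMap.comp_apply] at h4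
  rw [h4]
  congr 1
  ext j
  by_cases hj : j = i
  · subst hj; simp
  · simp [hj]

theorem line_deriv {n m : ℕ} {L : (Fin m → En n) → ℝ} {G : Fin m → (Fin m → En n) → En n}
    (hL : Differentiable ℝ L)
    (hG : ∀ i X, HasGradientAt (fun z => L (Function.update X i z)) (G i X) (X i))
    (X H : Fin m → En n) (ε : ℝ) :
    HasDerivAt (fun e : ℝ => L (X + e • H)) (∑ i, inner ℝ (G i (X + ε • H)) (H i)) ε := by
  have h1 : HasDerivAt (fun e : ℝ => X + e • H) H ε := by
    have := ((hasDerivAt_id ε).smul_const H).const_add X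
    simpa using this
  have h2 := (hL (X + ε • H)).hasFDerivAt.comp_hasDerivAt ε h1
  rw [grad_sum (hL _) (fun i => hG i _)] at h2
  exact h2

theorem firstvar {n m : ℕ} {A : Set ℝ} {a β : ℝ} {τ : ℝ → ℝ} (h : TS A a β τ)
    {L : ℝ → (Fin m → En n) → ℝ} {G : Fin m → ℝ → (Fin m → En n) → En n}
    (hLc : ContinuousOn (fun p : ℝ × (Fin m → En n) => L p.1 p.2) (tsTk A ×ˢ univ))
    (hGc : ∀ i, ContinuousOn (fun p : ℝ × (Fin m → En n) => G i p.1 p.2) (tsTk A ×ˢ univ))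
    (hL : ∀ t ∈ tsTk A, Differentiable ℝ (L t))
    (hG : ∀ i, ∀ t ∈ tsTk A, ∀ X,
      HasGradientAt (fun z => L t (Function.update X i z)) (G i t X) (X i))
    {X H : ℝ → Fin m → En n} (hX : RW A X) (hH : RW A H) :
    HasDerivAt (fun ε : ℝ => tI a τ (fun t => L t (X t + ε • H t)) β)
      (tI a τ (fun t => ∑ i, inner ℝ (G i t (X t)) (H t i)) β) 0 := by
  obtain ⟨Cx, hCx0, hCx⟩ := hX.bdd h
  obtain ⟨Ch, hCh0, hCh⟩ := hH.bdd h
  have hLRW : ∀ ε : ℝ, RW A (fun t => L t (X t + ε • H t)) := fun ε =>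
    (hX.add (hH.smul ε)).comp hLc
  have hGRW : RW A (fun t => ∑ i, inner ℝ (G i t (X t)) (H t i)) := by
    refine RW.sum _ fun i _ => ?_
    exact (hX.comp (hGc i)).innerP (hH.comp' (continuous_apply i))
  have hbound : ∃ C, ∀ t ∈ tsTk A, ∀ Z : Fin m → En n, ‖Z‖ ≤ Cx + Ch → ∀ i, ‖G i t Z‖ ≤ C := by
    have hb : ∀ i, ∃ C, ∀ p ∈ tsTk A ×ˢ Metric.closedBall (0 : Fin m → En n) (Cx + Ch),
        ‖G i p.1 p.2‖ ≤ C := fun i =>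
      (h.tk_compact.prod (isCompact_closedBall _ _)).exists_bound_of_continuousOn
        ((hGc i).mono (prod_mono_right (subset_univ _)))
    choose C hC using hb
    refine ⟨∑ i, |C i|, fun t ht Z hZ i => ?_⟩
    refine (hC i (t, Z) ⟨ht, by simpa using hZ⟩).trans ((le_abs_self _).trans ?_)
    exact Finset.single_le_sum (f := fun i => |C i|) (fun _ _ => abs_nonneg _) (Finset.mem_univ i)
  obtain ⟨C, hC⟩ := hbound
  have hae : ∀ᵐ s : ℝ, s ∈ uIoc a β → τ s ∈ tsTk A := by
    filter_upwards [ae_ne β] with s hs1 hs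
    rw [uIoc_of_le h.lt.le] at hs
    exact h.tau_tk ⟨hs.1.le, lt_of_le_of_ne hs.2 hs1⟩
  have key := intervalIntegral.hasDerivAt_integral_of_dominated_loc_of_deriv_le
    (μ := volume) (a := a) (b := β) (𝕜 := ℝ) (x₀ := (0 : ℝ)) (s := Metric.ball 0 1)
    (F := fun ε s => L (τ s) (X (τ s) + ε • H (τ s)))
    (F' := fun ε s => ∑ i, inner ℝ (G i (τ s) (X (τ s) + ε • H (τ s))) (H (τ s) i))
    (bound := fun _ => ∑ _i : Fin m, C * Ch)
    (Metric.ball_mem_nhds 0 one_pos)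
    (Eventually.of_forall fun ε => (intervalIntegrable_iff.1 ((hLRW ε).integrable h)).aestronglyMeasurable)
    ((hLRW 0).integrable h)
    (by
      have := (intervalIntegrable_iff.1 (hGRW.integrable h)).aestronglyMeasurable
      simpa using this)
    (by
      filter_upwards [hae] with s hs1 hs ε hε
      have ht := hs1 hs
      rw [mem_ball_zero_iff, Real.norm_eq_abs] at hε
      have hZ : ‖X (τ s) + ε • H (τ s)‖ ≤ Cx + Ch := by
        refine (norm_add_le _ _).trans (add_le_add (hCx _ ht) ?_)
        rw [norm_smul, Real.norm_eq_abs]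
        calc |ε| * ‖H (τ s)‖ ≤ 1 * ‖H (τ s)‖ := by gcongr
          _ ≤ Ch := by rw [one_mul]; exact hCh _ ht
      refine (norm_sum_le _ _).trans (Finset.sum_le_sum fun i _ => ?_)
      refine (norm_inner_le_norm _ _).trans ?_
      have h1 := hC _ ht _ hZ i
      have h2 : ‖H (τ s) i‖ ≤ Ch := (norm_le_pi_norm _ i).trans (hCh _ ht)
      exact mul_le_mul h1 h2 (norm_nonneg _) ((norm_nonneg _).trans h1))
    intervalIntegrable_const
    (by
      filter_upwards [hae] with s hs1 hs ε hε
      exact line_deriv (hL _ (hs1 hs)) (fun i Z => hG i _ (hs1 hs) Z) _ _ _)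
  have := key.2
  simpa [tI] using this

end firstvar
theorem higher_order_euler_lagrange_time_scales
    {n r : ℕ} (hn : 1 ≤ n) (hr : 1 ≤ r)
    (T₀ : Set ℝ) (hT₀closed : IsClosed T₀)
    (a b : ℝ) (ha : a ∈ T₀) (hb : b ∈ T₀) (hab : a < b)
    (T : Set ℝ) (hT : T = Icc a b ∩ T₀)
    (hcard : ∃ s : Finset ℝ, ↑s ⊆ T ∧ s.card = 2 * r + 1)
    (T' : Set ℝ) (hT' : T' = Icc a ((tsRho T)^[r - 1] b) ∩ T₀)
    (L : ℝ → (Fin (r + 1) → En n) → ℝ)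
    (Lu : ℕ → ℝ → (Fin (r + 1) → En n) → En n)
    (hLc : ContinuousOn (fun p : ℝ × (Fin (r + 1) → En n) => L p.1 p.2)
      (T ×ˢ (univ : Set (Fin (r + 1) → En n))))
    (hLsmooth : ∀ t ∈ T, ContDiff ℝ (r + 1) (L t))
    (hLu : ∀ i : Fin (r + 1), ∀ t ∈ T, ∀ X : Fin (r + 1) → En n,
      HasGradientAt (fun z => L t (Function.update X i z)) (Lu i.1 t X) (X i))
    (hLuc : ∀ i : Fin (r + 1),
      ContinuousOn (fun p : ℝ × (Fin (r + 1) → En n) => Lu i.1 p.1 p.2)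
        (T ×ˢ (univ : Set (Fin (r + 1) → En n))))
    (Y : ℕ → ℝ → En n)
    (hY : ∀ i < r, ∀ t ∈ tsTk^[i + 1] T, deltaDiffAt (tsTk^[i] T) (Y i) t (Y (i + 1) t))
    (hYrd : RdContinuousOn (tsTk^[r] T) (Y r))
    (hmin : ∃ δ > 0, ∀ Z : ℕ → ℝ → En n,
      (∀ i < r, ∀ t ∈ tsTk^[i + 1] T, deltaDiffAt (tsTk^[i] T) (Z i) t (Z (i + 1) t)) →
      RdContinuousOn (tsTk^[r] T) (Z r) →
      (∀ i < r, Z i a = Y i a ∧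
        Z i ((tsRho T)^[r - 1] b) = Y i ((tsRho T)^[r - 1] b)) →
      (∑ i ∈ Finset.range (r + 1), tsSupNorm (tsTk^[r] T) (fun t => Z i t - Y i t)) < δ →
      ∀ F G : ℝ → ℝ,
        IsDeltaAntideriv T' (fun t => L t (fun i => Y i.1 t)) F →
        IsDeltaAntideriv T' (fun t => L t (fun i => Z i.1 t)) G →
        F ((tsRho T)^[r - 1] b) - F a ≤ G ((tsRho T)^[r - 1] b) - G a) :
    ∃ p pd : ℕ → ℝ → En n,
      (∀ i < r, ∀ t ∈ tsTk^[r] T, deltaDiffAt T' (p i) t (pd i t)) ∧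
      (∀ t ∈ tsTk^[r] T, pd 0 t = -Lu 0 t (fun i => Y i.1 t)) ∧
      (∀ i, 1 ≤ i → i < r → ∀ t ∈ tsTk^[r] T,
        pd i t = -Lu i t (fun j => Y j.1 t) - p (i - 1) (tsSigma T t)) ∧
      (∀ t ∈ tsTk^[r] T, p (r - 1) (tsSigma T t) = -Lu r t (fun j => Y j.1 t)) := by
  obtain ⟨k, rfl⟩ : ∃ k, r = k + 1 := ⟨r - 1, by omega⟩
  simp only [Nat.add_sub_cancel] at hT' hmin ⊢
  obtain ⟨τ, hTS⟩ : ∃ τ, TS T a b τ := ⟨_, hT ▸ TS_T hT₀closed ha hb hab⟩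
  obtain ⟨s, hsT, hsc⟩ := hcard
  have hch := chain hTS s hsT
  set S : ℕ → Set ℝ := fun i => tsTk^[i] T with hSdef
  set M : ℕ → ℝ := fun i => (tsRho T)^[i] b with hMdef
  have hS : ∀ i < k + 1, TS (S i) a (M i) τ := fun i hi => (hch i (by omega)).2.2
  have hSS : ∀ i, S (i + 1) = tsTk (S i) := fun i => Function.iterate_succ_apply' _ _ _
  have hk : TS (S k) a (M k) τ := hS k (by omega)
  have hSk : S k = T ∩ Iic (M k) := (hch k (by omega)).2.1
  have hT'S : T' = S k := by
    have hm : ∀ x, x ∈ T ↔ (a ≤ x ∧ x ≤ b) ∧ x ∈ T₀ := fun x => by rw [hT]; rfl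
    have hT2 : T' = Icc a (M k) ∩ T₀ := hT'
    rw [hT2, hSk]
    have hMb : M k ≤ b := by
      have : M k ∈ T := by have := hk.hM; rw [hSk] at this; exact this.1
      exact (hTS.sub this).2
    ext x
    constructor
    · rintro ⟨⟨h1, h2⟩, h3⟩; exact ⟨(hm x).2 ⟨⟨h1, h2.trans hMb⟩, h3⟩, h2⟩
    · rintro ⟨h4, h2⟩
      obtain ⟨⟨h1, _⟩, h3⟩ := (hm x).1 h4
      exact ⟨⟨h1, h2⟩, h3⟩
  have hStop : tsTk^[k + 1] T = tsTk (S k) := hSS k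
  have hsubT : tsTk (S k) ⊆ T := fun x hx => by
    have := hk.tk_sub hx
    rw [hSk] at this; exact this.1
  have hprod : tsTk (S k) ×ˢ (univ : Set (Fin (k + 1 + 1) → En n)) ⊆ T ×ˢ univ :=
    prod_mono_left hsubT
  have hYRW : ∀ j ≤ k + 1, RW (S k) (Y j) := by
    intro j hj
    rcases hj.lt_or_eq with hlt | rfl
    · refine RW.of_cont fun t ht => ?_
      rw [← hSS] at ht ⊢
      have hmono : S (k + 1) ⊆ S (j + 1) := S_mono hS hSS (by omega)
      have hmono' : S (k + 1) ⊆ S j := S_mono hS hSS hj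
      exact (dd_cont (hmono' ht) (hY j hlt t (hmono ht))).mono hmono'
    · exact RW.of_rd hk (by rw [← hSS]; exact hYrd)
  set X : ℝ → Fin (k + 1 + 1) → En n := fun t i => Y i.1 t with hX
  have hXRW : RW (S k) X := RW.pi fun i => hYRW i.1 (by omega)
  set Ai : ℕ → ℝ → En n := fun i t => Lu i t (X t) with hAi
  have hA : ∀ i < k + 2, RW (S k) (Ai i) := fun i hi =>
    hXRW.comp ((hLuc ⟨i, hi⟩).mono hprod)
  have hdiff : ∀ t ∈ tsTk (S k), Differentiable ℝ (L t) := fun t ht =>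
    (hLsmooth t (hsubT ht)).differentiable (by simp)
  have h0 : ∀ η : ℝ → En n, RdContinuousOn (S (k + 1)) η →
      (∀ i < k + 1, NN a τ (k + 1) η i (M k) = 0) → tI a τ (LamI a τ k Ai η) (M k) = 0 := by
    intro η hη hη0
    set N := NN a τ (k + 1) η with hN
    have hNRW : ∀ i ≤ k + 1, RW (S k) (N i) := fun i hi => NN_RWtop hS hSS hη hi
    set H : ℝ → Fin (k + 1 + 1) → En n := fun t i => N i.1 t with hH
    have hHRW : RW (S k) H := RW.pi fun i => hNRW i.1 (by omega)
    have hfv := firstvar hk (G := fun i => Lu i.1) (hLc.mono hprod)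
      (fun i => (hLuc i).mono hprod) hdiff (fun i t ht => hLu i t (hsubT ht)) hXRW hHRW
    have hLam : LamI a τ k Ai η = fun t => ∑ i : Fin (k + 1 + 1), inner ℝ (Lu i.1 t (X t)) (H t i) := by
      funext t
      unfold LamI
      rw [Finset.sum_range]
    rw [hLam]
    refine IsLocalMin.hasDerivAt_eq_zero ?_ hfv
    obtain ⟨δ, hδ, hmin⟩ := hmin
    have hB : ∀ i, ∃ C, 0 ≤ C ∧ (i ≤ k + 1 → ∀ t ∈ tsTk (S k), ‖N i t‖ ≤ C) := by
      intro i
      by_cases hi : i ≤ k + 1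
      · obtain ⟨C, h1, h2⟩ := (hNRW i hi).bdd hk
        exact ⟨C, h1, fun _ => h2⟩
      · exact ⟨0, le_rfl, fun h => absurd h hi⟩
    choose C hC0 hC using hB
    set D := ∑ i ∈ Finset.range (k + 1 + 1), C i with hD
    have hD0 : 0 ≤ D := Finset.sum_nonneg fun i _ => hC0 i
    have hev : ∀ᶠ ε : ℝ in 𝓝 0, |ε| * D < δ := by
      have : Tendsto (fun ε : ℝ => |ε| * D) (𝓝 0) (𝓝 (|0| * D)) :=
        (continuous_abs.mul continuous_const).tendsto 0
      refine this.eventually (Iio_mem_nhds ?_)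
      simpa using hδ
    filter_upwards [hev] with ε hε
    have hLY : RW (S k) (fun t => L t (X t)) := hXRW.comp (hLc.mono hprod)
    have hLZ : RW (S k) (fun t => L t (X t + ε • H t)) :=
      (hXRW.add (hHRW.smul ε)).comp (hLc.mono hprod)
    have := hmin (fun i t => Y i t + ε • N i t) ?_ ?_ ?_ ?_
      (tI a τ (fun t => L t (X t))) (tI a τ (fun t => L t (X t + ε • H t))) ?_ ?_
    · simp only [tI_a, sub_zero] at this
      simpa using this
    · intro i hi t ht
      exact dd_add (hY i hi t ht) (dd_smul ε (NN_dd hS hSS hη hi ht))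
    · have hNr : N (k + 1) = η := NN_self
      simp only [hNr]
      exact rd_add hYrd (rd_smul ε hη)
    · intro i hi
      have e1 : N i a = 0 := NN_a hi
      have e2 : N i (M k) = 0 := hη0 i hi
      refine ⟨?_, ?_⟩
      · simp [e1]
      · show Y i (M k) + ε • N i (M k) = Y i (M k)
        simp [e2]
    · refine lt_of_le_of_lt ?_ hε
      rw [hD, Finset.mul_sum]
      refine Finset.sum_le_sum fun i hi => ?_
      rw [Finset.mem_range] at hi
      unfold tsSupNorm
      refine Real.sSup_le ?_ (mul_nonneg (abs_nonneg _) (hC0 i))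
      rintro _ ⟨t, ht, rfl⟩
      rw [hStop] at ht
      simp only [add_sub_cancel_left, norm_smul, Real.norm_eq_abs]
      exact mul_le_mul_of_nonneg_left (hC i (by omega) t ht) (abs_nonneg _)
    · rw [hT'S]
      exact fun t ht => tI_dd hk hLY ht
    · rw [hT'S]
      exact fun t ht => tI_dd hk hLZ ht
  obtain ⟨c, hc⟩ := core hS hSS hA h0
  have hP := PP_spec hk hA c
  have hσ : ∀ t ∈ tsTk (S k), min (tsSigma T t) (M k) = tsSigma (S k) t := fun t ht =>
    (sigma_min hTS hk hSk (hk.tk_sub ht)).symm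
  refine ⟨fun i x => PP a τ (S k) (M k) Ai c i (min x (M k)), Pd a τ (S k) (M k) Ai c, ?_, ?_, ?_, ?_⟩
  · intro i hi t ht
    rw [hStop] at ht
    rw [hT'S]
    refine dd_congr (hk.sigma_spec (hk.tk_sub ht)).1 ?_ ((hP i (by omega)).2.2 t ht)
    intro x hx
    beta_reduce
    rw [min_eq_left (hk.sub hx).2]
  · intro t _; rfl
  · intro i hi1 hi t ht
    rw [hStop] at ht
    obtain ⟨j, rfl⟩ : ∃ j, i = j + 1 := ⟨i - 1, by omega⟩
    simp only [Nat.add_sub_cancel]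
    rw [hσ t ht]
    rfl
  · intro t ht
    rw [hStop] at ht
    beta_reduce
    rw [hσ t ht]
    exact hc t ht
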